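/- arXiv:1401.6252 — 2 statements merged into one kernel-verified Lean document; each statement's English description precedes it below -/
import Mathlib

section
/- Let k be a positive integer such that there exists no binary extremal doubly even self-dual code of length 24k+8 (a condition known to hold for every k ≥ 159). Then the minimum Lee weight of every self-dual Z4-code of length 24k+8 is neither 8k+6 nor 8k+8; combined with Rains's bound d_L ≤ 8k+8 for such codes, the minimum Lee weight is at most 8k+4. -/
open Finset

namespace Z4Note

variable {ι : Type*} [Fintype ι]

/-- Hamming weight of a binary vector. -/
def hWt (x : ι → ZMod 2) : ℕ := (Finset.univ.filter fun i => x i ≠ 0).card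

/-- Lee value of an element of `ZMod 4`:  0 ↦ 0, 1 ↦ 1, 2 ↦ 2, 3 ↦ 1. -/
def leeVal (a : ZMod 4) : ℕ := min a.val (4 - a.val)

/-- Lee weight `n₁(x) + 2 n₂(x) + n₃(x)`. -/
def leeWt (x : ι → ZMod 4) : ℕ := ∑ i, leeVal (x i)

/-- Euclidean weight `n₁(x) + 4 n₂(x) + n₃(x)`. -/
def eucWt (x : ι → ZMod 4) : ℕ := ∑ i, (leeVal (x i)) ^ 2

/-- Number of coordinates of `x` equal to `a`. -/
def nCount (a : ZMod 4) (x : ι → ZMod 4) : ℕ := (Finset.univ.filter fun i => x i = a).card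

/-- Dual of a `ZMod 4`-code (as a set), w.r.t. the standard inner product. -/
def dualZ4 (C : Set (ι → ZMod 4)) : Set (ι → ZMod 4) :=
  {x | ∀ y ∈ C, ∑ i, x i * y i = 0}

/-- Dual of a binary code (as a set), w.r.t. the standard inner product. -/
def dual2 (C : Set (ι → ZMod 2)) : Set (ι → ZMod 2) :=
  {x | ∀ y ∈ C, ∑ i, x i * y i = 0}

/-- A `ZMod 4`-code is self-dual if it equals its dual. -/
def SelfDualZ4 (C : Submodule (ZMod 4) (ι → ZMod 4)) : Prop :=
  (C : Set (ι → ZMod 4)) = dualZ4 (C : Set (ι → ZMod 4))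

/-- A binary code is self-dual if it equals its dual. -/
def SelfDual2 (D : Submodule (ZMod 2) (ι → ZMod 2)) : Prop :=
  (D : Set (ι → ZMod 2)) = dual2 (D : Set (ι → ZMod 2))

/-- Coordinatewise reduction modulo 2. -/
def res2 (x : ι → ZMod 4) : ι → ZMod 2 :=
  fun i => ZMod.castHom (by norm_num : (2:ℕ) ∣ 4) (ZMod 2) (x i)

/-- The residue code `C⁽¹⁾ = {c mod 2 : c ∈ C}`. -/
def residue (C : Set (ι → ZMod 4)) : Set (ι → ZMod 2) := res2 '' C

/-- Minimum Lee weight among nonzero codewords. -/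
noncomputable def minLee (C : Set (ι → ZMod 4)) : ℕ := sInf {d | ∃ x ∈ C, x ≠ 0 ∧ leeWt x = d}

/-- Minimum Euclidean weight among nonzero codewords. -/
noncomputable def minEuc (C : Set (ι → ZMod 4)) : ℕ := sInf {d | ∃ x ∈ C, x ≠ 0 ∧ eucWt x = d}

/-- Minimum Hamming weight among nonzero codewords of a binary code. -/
noncomputable def minHam (C : Set (ι → ZMod 2)) : ℕ := sInf {d | ∃ x ∈ C, x ≠ 0 ∧ hWt x = d}

/-- A binary code is doubly even if all weights are divisible by 4. -/
def DoublyEven (C : Set (ι → ZMod 2)) : Prop := ∀ x ∈ C, 4 ∣ hWt x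

/-- A binary code is singly even if some codeword has weight not divisible by 4. -/
def SinglyEven (C : Set (ι → ZMod 2)) : Prop := ∃ x ∈ C, ¬ 4 ∣ hWt x

/-- A self-dual `ZMod 4`-code is Type II if all Euclidean weights are divisible by 8. -/
def TypeII (C : Set (ι → ZMod 4)) : Prop := ∀ x ∈ C, 8 ∣ eucWt x

/-- The doubly even subcode of a binary code. -/
def evenSubcode (D : Set (ι → ZMod 2)) : Set (ι → ZMod 2) := {x ∈ D | 4 ∣ hWt x}

/-- The shadow `S = D₀^⊥ \ D` of a binary code. -/
def shadow (D : Set (ι → ZMod 2)) : Set (ι → ZMod 2) := dual2 (evenSubcode D) \ D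

/-- A binary singly even self-dual code is s-extremal if equality holds in the
Bachoc–Gaborit bound relating the minimum weight of the code and of its shadow. -/
def SExtremal (D : Submodule (ZMod 2) (ι → ZMod 2)) : Prop :=
  SelfDual2 D ∧ SinglyEven (D : Set (ι → ZMod 2)) ∧
  ((¬ (Fintype.card ι % 24 = 22 ∧
        minHam (D : Set (ι → ZMod 2)) = 4 * (Fintype.card ι / 24) + 6)) →
      minHam (shadow (D : Set (ι → ZMod 2))) + 2 * minHam (D : Set (ι → ZMod 2)) =
        Fintype.card ι / 2 + 4) ∧
  ((Fintype.card ι % 24 = 22 ∧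
        minHam (D : Set (ι → ZMod 2)) = 4 * (Fintype.card ι / 24) + 6) →
      minHam (shadow (D : Set (ι → ZMod 2))) + 2 * minHam (D : Set (ι → ZMod 2)) =
        Fintype.card ι / 2 + 8)

/-- Equivalence of `ZMod 4`-codes: coordinate permutation together with sign changes. -/
def Z4Equiv (C C' : Set (ι → ZMod 4)) : Prop :=
  ∃ σ : Equiv.Perm ι, ∃ ε : ι → ZMod 4, (∀ i, ε i = 1 ∨ ε i = -1) ∧
    C' = (fun x => fun i => ε i * x (σ i)) '' C

/-- Covering radius of a binary code. -/
noncomputable def covRad (C : Set (ι → ZMod 2)) : ℕ :=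
  sInf {R | ∀ v : ι → ZMod 2, ∃ c ∈ C, hWt (v - c) ≤ R}

/-- Entry `(i,j)` of the circulant matrix with first row `r`. -/
def circEntry {m : ℕ} (r : Fin m → ZMod 4) (i j : Fin m) : ZMod 4 := r (j - i)

/-- Entry `(i,j)` of the negacirculant matrix with first row `r`. -/
def negaEntry {m : ℕ} (r : Fin m → ZMod 4) (i j : Fin m) : ZMod 4 :=
  if i.val ≤ j.val then r (j - i) else - r (j - i)

/-- The bordered part `B` of the generator matrix of a bordered double circulant code. -/
def bdcB {m : ℕ} (α β γ : ZMod 4) (r : Fin m → ZMod 4) :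
    Fin (m+1) → Fin (m+1) → ZMod 4 :=
  Fin.cases (Fin.cases α fun _ => β) (fun i' => Fin.cases γ fun j' => circEntry r i' j')

/-- Row `i` of the generator matrix `(I | B)` of a bordered double circulant code. -/
def bdcRow {m : ℕ} (α β γ : ZMod 4) (r : Fin m → ZMod 4) (i : Fin (m+1)) :
    (Fin (m+1) ⊕ Fin (m+1)) → ZMod 4 :=
  Sum.elim (fun j => if j = i then 1 else 0) (bdcB α β γ r i)

/-- The bordered double circulant code of length `2(m+1)`. -/
def bdcCode {m : ℕ} (α β γ : ZMod 4) (r : Fin m → ZMod 4) :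
    Submodule (ZMod 4) ((Fin (m+1) ⊕ Fin (m+1)) → ZMod 4) :=
  Submodule.span (ZMod 4) (Set.range (bdcRow α β γ r))

/-- The block matrix `[[A, B], [-Bᵀ, Aᵀ]]` built from negacirculant `A`, `B`. -/
def fourNegaM {n : ℕ} (a b : Fin n → ZMod 4) :
    (Fin n ⊕ Fin n) → (Fin n ⊕ Fin n) → ZMod 4
  | Sum.inl i, Sum.inl j => negaEntry a i j
  | Sum.inl i, Sum.inr j => negaEntry b i j
  | Sum.inr i, Sum.inl j => - negaEntry b j i
  | Sum.inr i, Sum.inr j => negaEntry a j i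

/-- Row `i` of the generator matrix `(I | M)` of a four-negacirculant code. -/
def fourNegaRow {n : ℕ} (a b : Fin n → ZMod 4) (i : Fin n ⊕ Fin n) :
    ((Fin n ⊕ Fin n) ⊕ (Fin n ⊕ Fin n)) → ZMod 4 :=
  Sum.elim (fun j => if j = i then 1 else 0) (fourNegaM a b i)

/-- The four-negacirculant code of length `4n`. -/
def fourNegaCode {n : ℕ} (a b : Fin n → ZMod 4) :
    Submodule (ZMod 4) (((Fin n ⊕ Fin n) ⊕ (Fin n ⊕ Fin n)) → ZMod 4) :=
  Submodule.span (ZMod 4) (Set.range (fourNegaRow a b))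

end Z4Note

/-!
The residue code of a self-dual `ZMod 4`-code `C` of length `n` is doubly even. When `8 ∣ n`, a
maximal doubly even code `D` is self-dual: `D⊥` is an even code in which exactly the words of `D`
have weight divisible by four, so the MacWilliams identity at `(1, i)` gives
`2 |D| - |D⊥| = 2 ^ (n / 2)`, which together with `|D| |D⊥| = 2 ^ n` forces `|D| = |D⊥|`. Take such
a `D` containing the residue code. Then `D` lies in the dual of the residue code, so `2 D ⊆ C` and
the minimum Lee weight of `C` is at most twice the minimum weight of `D`. The latter is at most
`4 ⌊n / 24⌋ + 4` by the Mallows–Sloane bound, so a Lee weight above `8 ⌊n / 24⌋ + 4` would make `D`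
extremal.

For the Mallows–Sloane bound, write `f` and `g` for Gleason's invariants of degrees 8 and 24,
dehomogenized in `t = y ^ 4`. By Gleason's theorem a weight enumerator `W` of degree `8 j` divided
by `f ^ j` is a polynomial in `φ = g / f ^ 3 = t + ⋯`. If `W = 1 + O(t ^ (m + 2))` with
`3 (m + 1) > j`, then `f ^ (-j)` agrees with a polynomial in `φ` of degree at most `m` up to
`O(t ^ (m + 2))`, so its coefficient at `φ ^ (m + 1)` vanishes. Lagrange inversion computes that
coefficient as a nonzero multiple of `[t ^ m] f' * f ^ (3 * m + 2 - j) * (1 - t) ^ (-4 * (m + 1))`,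
which is positive.
-/

namespace Z4Note

open scoped Matrix

section MacWilliams

variable {ι : Type*} [Fintype ι]

/-- The homogeneous weight enumerator `∑ c ∈ S, x ^ (n - wt c) * y ^ wt c` of a set of binary
words of length `n`, as a function of two elements of a commutative semiring. -/
noncomputable def weightEnum {R : Type*} [CommSemiring R] (S : Set (ι → ZMod 2)) (x y : R) : R :=
  ∑ c ∈ S.toFinite.toFinset, x ^ (Fintype.card ι - hWt c) * y ^ hWt c

/-- The nontrivial additive character of `ZMod 2`. -/
def signChar : AddChar (ZMod 2) ℤ :=
  AddChar.zmodChar 2 (ζ := -1) (by norm_num)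

lemma signChar_eq_one_iff (a : ZMod 2) : signChar a = 1 ↔ a = 0 := by
  revert a
  simp only [signChar, AddChar.zmodChar_apply]
  decide

lemma sum_signChar_dotProduct_of_notMem (D : Submodule (ZMod 2) (ι → ZMod 2))
    {v : ι → ZMod 2} (hv : v ∉ dual2 (D : Set (ι → ZMod 2))) :
    ∑ c ∈ (D : Set (ι → ZMod 2)).toFinite.toFinset, signChar (v ⬝ᵥ c) = 0 := by
  have := Fintype.ofFinite D
  let ψ : AddChar D ℤ := signChar.compAddMonoidHom
    (AddMonoidHom.mk' (fun c : D => v ⬝ᵥ c) fun a b => dotProduct_add v a b)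
  have hψ : ψ ≠ 0 := by
    rintro h
    refine hv fun c hc => (signChar_eq_one_iff _).mp ?_
    exact DFunLike.congr_fun h (⟨c, hc⟩ : D)
  rw [Finset.sum_subtype _ (p := (· ∈ D)) fun c => by simp]
  exact AddChar.sum_eq_zero_iff_ne_zero.mpr hψ

lemma addChar_map_sum {A M : Type*} [AddCommMonoid A] [CommMonoid M] (ψ : AddChar A M)
    (f : ι → A) : ψ (∑ i, f i) = ∏ i, ψ (f i) :=
  map_prod ψ.toMonoidHom (fun i => Multiplicative.ofAdd (f i)) univ

lemma pow_mul_pow_hWt {R : Type*} [CommSemiring R] (x y : R) (v : ι → ZMod 2) :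
    x ^ (Fintype.card ι - hWt v) * y ^ hWt v = ∏ i, if v i = 0 then x else y := by
  have hcard : #{i | v i = 0} = Fintype.card ι - hWt v :=
    Nat.eq_sub_of_add_eq (Finset.card_filter_add_card_filter_not (s := univ) fun i => v i = 0)
  rw [Finset.prod_ite, Finset.prod_const, Finset.prod_const, hcard]
  rfl

lemma sum_signChar_mul_pow [DecidableEq ι] {R : Type*} [CommRing R] (x y : R) (c : ι → ZMod 2) :
    ∑ v : ι → ZMod 2, (signChar (v ⬝ᵥ c) : R) * (x ^ (Fintype.card ι - hWt v) * y ^ hWt v) =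
      (x + y) ^ (Fintype.card ι - hWt c) * (x - y) ^ hWt c := by
  have hlocal (b : ZMod 2) :
      ∑ a : ZMod 2, (signChar (a * b) : R) * (if a = 0 then x else y) =
        if b = 0 then x + y else x - y := by
    have huniv : (univ : Finset (ZMod 2)) = {0, 1} := rfl
    have hone : signChar 1 = -1 := rfl
    obtain rfl | rfl : b = 0 ∨ b = 1 := by decide +revert
    all_goals simp [huniv, hone, sub_eq_add_neg]
  calc ∑ v : ι → ZMod 2, (signChar (v ⬝ᵥ c) : R) *
        (x ^ (Fintype.card ι - hWt v) * y ^ hWt v)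
      = ∑ v : ι → ZMod 2, ∏ i, (signChar (v i * c i) : R) * (if v i = 0 then x else y) := by
        simp only [pow_mul_pow_hWt, dotProduct, addChar_map_sum, Int.cast_prod,
          Finset.prod_mul_distrib]
    _ = ∏ i, ∑ a : ZMod 2, (signChar (a * c i) : R) * (if a = 0 then x else y) := by
        rw [Finset.prod_univ_sum, Fintype.piFinset_univ]
    _ = (x + y) ^ (Fintype.card ι - hWt c) * (x - y) ^ hWt c := by
        simp only [hlocal, pow_mul_pow_hWt]

theorem macWilliams {R : Type*} [CommRing R] (D : Submodule (ZMod 2) (ι → ZMod 2)) (x y : R) :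
    weightEnum (D : Set (ι → ZMod 2)) (x + y) (x - y) =
      (D : Set (ι → ZMod 2)).ncard * weightEnum (dual2 (D : Set (ι → ZMod 2))) x y := by
  classical
  set S := (D : Set (ι → ZMod 2)).toFinite.toFinset with hS
  have hchar (v : ι → ZMod 2) : ∑ c ∈ S, signChar (v ⬝ᵥ c) =
      if v ∈ dual2 (D : Set (ι → ZMod 2)) then (D : Set (ι → ZMod 2)).ncard else 0 := by
    split_ifs with hv
    · have hone : ∀ c ∈ S, signChar (v ⬝ᵥ c) = 1 := fun c hc =>
        (signChar_eq_one_iff _).mpr (hv c (by simpa [hS] using hc))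
      rw [Finset.sum_congr rfl hone, Set.ncard_eq_toFinset_card _ (Set.toFinite _)]
      simp [hS]
    · exact sum_signChar_dotProduct_of_notMem D hv
  calc weightEnum (D : Set (ι → ZMod 2)) (x + y) (x - y)
      = ∑ c ∈ S, ∑ v : ι → ZMod 2, (signChar (v ⬝ᵥ c) : R) *
          (x ^ (Fintype.card ι - hWt v) * y ^ hWt v) := by
        simp only [sum_signChar_mul_pow, weightEnum, hS]
    _ = ∑ v : ι → ZMod 2, ((∑ c ∈ S, signChar (v ⬝ᵥ c) : ℤ) : R) *
          (x ^ (Fintype.card ι - hWt v) * y ^ hWt v) := by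
        rw [Finset.sum_comm]
        simp only [Int.cast_sum, Finset.sum_mul]
    _ = (D : Set (ι → ZMod 2)).ncard * weightEnum (dual2 (D : Set (ι → ZMod 2))) x y := by
        simp only [hchar, Nat.cast_ite, Nat.cast_zero, Int.cast_ite, Int.cast_natCast,
          Int.cast_zero, ite_mul, zero_mul, weightEnum, Finset.mul_sum, ← Finset.sum_filter]
        refine Finset.sum_congr (by ext; simp) fun v _ => rfl

theorem ncard_mul_ncard_dual2 (D : Submodule (ZMod 2) (ι → ZMod 2)) :
    (D : Set (ι → ZMod 2)).ncard * (dual2 (D : Set (ι → ZMod 2))).ncard = 2 ^ Fintype.card ι := by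
  have hmac := macWilliams (R := ℤ) D 1 1
  have hleft : weightEnum (D : Set (ι → ZMod 2)) (1 + 1 : ℤ) (1 - 1) = 2 ^ Fintype.card ι := by
    rw [weightEnum, Finset.sum_eq_single 0]
    · simp [hWt]
    · intro c _ hc
      have hpos : 0 < hWt c := hammingNorm_pos_iff.mpr hc
      simp [hpos.ne']
    · simp
  have hright : weightEnum (dual2 (D : Set (ι → ZMod 2))) (1 : ℤ) 1 =
      (dual2 (D : Set (ι → ZMod 2))).ncard := by
    simp [weightEnum, Set.ncard_eq_toFinset_card _ (Set.toFinite _)]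
  rw [hleft, hright] at hmac
  exact_mod_cast hmac.symm

end MacWilliams

section DoublyEvenCodes

variable {ι : Type*} [Fintype ι]

lemma hWt_eq_sum_val (x : ι → ZMod 2) : hWt x = ∑ i, (x i).val := by
  have hval (a : ZMod 2) : a.val = if a ≠ 0 then 1 else 0 := by decide +revert
  simp only [hWt, hval, Finset.card_filter]

lemma hWt_add_add_two_mul_hWt_mul (x y : ι → ZMod 2) :
    hWt (x + y) + 2 * hWt (x * y) = hWt x + hWt y := by
  have hval (a b : ZMod 2) : (a + b).val + 2 * (a * b).val = a.val + b.val := by decide +revert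
  simp only [hWt_eq_sum_val, Finset.mul_sum, ← Finset.sum_add_distrib, Pi.add_apply, Pi.mul_apply,
    hval]

lemma dotProduct_eq_zero_iff_two_dvd_hWt_mul (x y : ι → ZMod 2) :
    x ⬝ᵥ y = 0 ↔ 2 ∣ hWt (x * y) := by
  rw [← ZMod.natCast_eq_zero_iff, hWt_eq_sum_val]
  simp [dotProduct]

lemma four_dvd_hWt_add_iff {x y : ι → ZMod 2} (hx : 4 ∣ hWt x) (hy : 4 ∣ hWt y) :
    4 ∣ hWt (x + y) ↔ x ⬝ᵥ y = 0 := by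
  have hadd := hWt_add_add_two_mul_hWt_mul x y
  rw [dotProduct_eq_zero_iff_two_dvd_hWt_mul]
  omega

lemma DoublyEven.subset_dual2 {D : Submodule (ZMod 2) (ι → ZMod 2)}
    (hD : DoublyEven (D : Set (ι → ZMod 2))) :
    (D : Set (ι → ZMod 2)) ⊆ dual2 (D : Set (ι → ZMod 2)) :=
  fun _ hx _ hy => (four_dvd_hWt_add_iff (hD _ hx) (hD _ hy)).mp (hD _ (D.add_mem hx hy))

lemma DoublyEven.sup_span_singleton {D : Submodule (ZMod 2) (ι → ZMod 2)}
    (hD : DoublyEven (D : Set (ι → ZMod 2))) {x : ι → ZMod 2}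
    (hx : x ∈ dual2 (D : Set (ι → ZMod 2))) (hwt : 4 ∣ hWt x) :
    DoublyEven ((D ⊔ Submodule.span (ZMod 2) {x} : Submodule (ZMod 2) (ι → ZMod 2)) :
      Set (ι → ZMod 2)) := by
  intro v hv
  obtain ⟨c, hc, w, hw, rfl⟩ := Submodule.mem_sup.mp hv
  obtain ⟨a, rfl⟩ := Submodule.mem_span_singleton.mp hw
  obtain rfl | rfl := (by decide : ∀ a : ZMod 2, a = 0 ∨ a = 1) a
  · simpa using hD c hc
  · rw [one_smul, add_comm]
    exact (four_dvd_hWt_add_iff hwt (hD c hc)).mpr (hx c hc)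

lemma mem_of_maximal_doublyEven {D : Submodule (ZMod 2) (ι → ZMod 2)}
    (hD : Maximal (fun E : Submodule (ZMod 2) (ι → ZMod 2) => DoublyEven (E : Set (ι → ZMod 2))) D)
    {x : ι → ZMod 2} (hx : x ∈ dual2 (D : Set (ι → ZMod 2))) (hwt : 4 ∣ hWt x) : x ∈ D :=
  hD.le_of_ge (hD.prop.sup_span_singleton hx hwt) le_sup_left
    (Submodule.mem_sup_right (Submodule.mem_span_singleton_self x))

lemma weightEnum_of_pow_four_eq {R : Type*} [CommSemiring R] {S : Set (ι → ZMod 2)}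
    (hS : DoublyEven S) {x y : R} (hxy : x ^ 4 = y ^ 4) :
    weightEnum S x y = S.ncard * x ^ Fintype.card ι := by
  have hterm : ∀ c ∈ S.toFinite.toFinset,
      x ^ (Fintype.card ι - hWt c) * y ^ hWt c = x ^ Fintype.card ι := fun c hc => by
    have hle : hWt c ≤ Fintype.card ι := hammingNorm_le_card_fintype
    obtain ⟨w, hw⟩ := hS c (by simpa using hc)
    rw [hw, pow_mul, ← hxy, ← pow_mul, ← pow_add, ← hw, Nat.sub_add_cancel hle]
  rw [weightEnum, Finset.sum_congr rfl hterm, Finset.sum_const, nsmul_eq_mul,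
    Set.ncard_eq_toFinset_card _ S.toFinite]

lemma two_dvd_hWt_of_mem_dual2 {S : Set (ι → ZMod 2)} (hS : 1 ∈ S) {x : ι → ZMod 2}
    (hx : x ∈ dual2 S) : 2 ∣ hWt x := by
  simpa using (dotProduct_eq_zero_iff_two_dvd_hWt_mul x 1).mp (hx 1 hS)

lemma one_mem_of_maximal_doublyEven (h4 : 4 ∣ Fintype.card ι)
    {D : Submodule (ZMod 2) (ι → ZMod 2)}
    (hD : Maximal (fun E : Submodule (ZMod 2) (ι → ZMod 2) =>
      DoublyEven (E : Set (ι → ZMod 2))) D) : 1 ∈ D := by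
  refine mem_of_maximal_doublyEven hD (fun c hc => ?_) (by simpa [hWt] using h4)
  have h2 : 2 ∣ hWt c := dvd_trans (by norm_num) (hD.prop c hc)
  exact (dotProduct_eq_zero_iff_two_dvd_hWt_mul 1 c).mpr (by simpa using h2)

open Complex in
lemma weightEnum_dual2_one_I_of_maximal (h4 : 4 ∣ Fintype.card ι)
    {D : Submodule (ZMod 2) (ι → ZMod 2)}
    (hD : Maximal (fun E : Submodule (ZMod 2) (ι → ZMod 2) =>
      DoublyEven (E : Set (ι → ZMod 2))) D) :
    weightEnum (dual2 (D : Set (ι → ZMod 2))) 1 I =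
      2 * (D : Set (ι → ZMod 2)).ncard - (dual2 (D : Set (ι → ZMod 2))).ncard := by
  classical
  set T := (dual2 (D : Set (ι → ZMod 2))).toFinite.toFinset with hT
  have hterm : ∀ c ∈ T, (1 : ℂ) ^ (Fintype.card ι - hWt c) * I ^ hWt c =
      2 * (if c ∈ D then 1 else 0) - 1 := fun c hc => by
    have hc' : c ∈ dual2 (D : Set (ι → ZMod 2)) := by simpa [hT] using hc
    obtain ⟨w, hw⟩ := two_dvd_hWt_of_mem_dual2 (one_mem_of_maximal_doublyEven h4 hD) hc'
    have hmem : c ∈ D ↔ Even w := by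
      refine ⟨fun h => ?_, fun h => mem_of_maximal_doublyEven hD hc' ?_⟩
      · have := hD.prop c h
        exact even_iff_two_dvd.mpr (by omega)
      · have := even_iff_two_dvd.mp h
        omega
    rw [one_pow, one_mul, hw, pow_mul, I_sq]
    rcases w.even_or_odd with h | h
    · rw [h.neg_one_pow, if_pos (hmem.mpr h)]
      norm_num
    · simp [hmem, h.neg_one_pow, Nat.not_even_iff_odd.mpr h]
  have hfilter : {c ∈ T | c ∈ D} = (D : Set (ι → ZMod 2)).toFinite.toFinset := by
    ext c
    simpa [hT] using fun hc => hD.prop.subset_dual2 hc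
  rw [weightEnum, Finset.sum_congr rfl hterm, Finset.sum_sub_distrib, ← Finset.mul_sum,
    Finset.sum_boole, hfilter, Set.ncard_eq_toFinset_card _ (Set.toFinite _),
    Set.ncard_eq_toFinset_card _ (Set.toFinite _)]
  simp [hT]

open Complex in
lemma selfDual2_of_maximal_doublyEven (h8 : 8 ∣ Fintype.card ι)
    {D : Submodule (ZMod 2) (ι → ZMod 2)}
    (hD : Maximal (fun E : Submodule (ZMod 2) (ι → ZMod 2) =>
      DoublyEven (E : Set (ι → ZMod 2))) D) : SelfDual2 D := by
  obtain ⟨j, hj⟩ := h8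
  set a := (D : Set (ι → ZMod 2)).ncard
  set b := (dual2 (D : Set (ι → ZMod 2))).ncard
  have ha : (a : ℤ) ≠ 0 := by
    exact_mod_cast ((Set.ncard_pos (Set.toFinite _)).mpr ⟨0, D.zero_mem⟩).ne'
  have hpow : (1 + I) ^ 4 = -4 ∧ (1 - I) ^ 4 = -4 := by
    constructor <;> ring_nf <;> norm_num [I_sq, I_pow_three, I_pow_four] <;> ring
  have hmac : (a : ℂ) * 16 ^ j = a * (2 * a - b) := by
    rw [← weightEnum_dual2_one_I_of_maximal (hj ▸ ⟨2 * j, by ring⟩) hD, ← macWilliams,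
      weightEnum_of_pow_four_eq hD.prop (hpow.1.trans hpow.2.symm), hj,
      show 8 * j = 4 * (2 * j) by ring, pow_mul, hpow.1, pow_mul]
    norm_num [a]
  have hdiff : (2 * a - b : ℤ) = 16 ^ j := (mul_left_cancel₀ ha (by exact_mod_cast hmac)).symm
  have hprod : (a * b : ℤ) = 16 ^ j * 16 ^ j := by
    have := ncard_mul_ncard_dual2 D
    rw [hj, pow_mul, show 2 ^ 8 = 16 * 16 by rfl, mul_pow] at this
    exact_mod_cast this
  have hab : (b : ℤ) = a := by
    have hfactor : (b - a) * (b - 4 * a) = (0 : ℤ) := by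
      rw [← hdiff] at hprod
      linear_combination -hprod
    rcases mul_eq_zero.mp hfactor with h | h
    · linarith
    · have : (0 : ℤ) < 16 ^ j := by positivity
      omega
  exact Set.eq_of_subset_of_ncard_le hD.prop.subset_dual2 (by exact_mod_cast hab.le)

theorem DoublyEven.exists_le_selfDual2 (h8 : 8 ∣ Fintype.card ι)
    {D : Submodule (ZMod 2) (ι → ZMod 2)} (hD : DoublyEven (D : Set (ι → ZMod 2))) :
    ∃ E, D ≤ E ∧ DoublyEven (E : Set (ι → ZMod 2)) ∧ SelfDual2 E := by
  obtain ⟨E, hDE, hE⟩ := Set.Finite.exists_le_maximal (Set.toFinite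
    {E : Submodule (ZMod 2) (ι → ZMod 2) | DoublyEven (E : Set (ι → ZMod 2))}) hD
  exact ⟨E, hDE, hE.prop, selfDual2_of_maximal_doublyEven h8 hE⟩

end DoublyEvenCodes

section Gleason

open Polynomial

lemma X_sub_one_pow_dvd_of_dvd_expand {R : Type*} [CommRing R] [IsDomain R] {p : ℕ}
    (hp : (p : R) ≠ 0) {n : ℕ} {Q : R[X]} (h : (X - 1) ^ n ∣ expand R p Q) :
    (X - 1) ^ n ∣ Q := by
  have hprime : Prime (X - 1 : R[X]) := by simpa using prime_X_sub_C (1 : R)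
  have hdvd_iff (P : R[X]) : X - 1 ∣ P ↔ P.eval 1 = 0 := by
    simpa using dvd_iff_isRoot (p := P) (a := 1)
  induction n generalizing Q with
  | zero => simp
  | succ n ih =>
    have hroot : X - 1 ∣ Q := by
      have := (hdvd_iff _).mp ((dvd_pow_self _ n.succ_ne_zero).trans h)
      rwa [expand_eval, one_pow, ← hdvd_iff] at this
    obtain ⟨P, rfl⟩ := hroot
    set S : R[X] := ∑ i ∈ range p, X ^ i with hS
    have hgeom : expand R p (X - 1) = (X - 1) * S := by
      rw [map_sub, expand_X, map_one, hS, mul_geom_sum]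
    have hgeom_eval : ¬ X - 1 ∣ S := by
      simpa [hdvd_iff, hS, eval_finsetSum] using hp
    rw [map_mul, hgeom, pow_succ', mul_assoc] at h
    rw [pow_succ']
    exact mul_dvd_mul_left _ (ih (hprime.pow_dvd_of_dvd_mul_left _ hgeom_eval
      ((mul_dvd_mul_iff_left hprime.ne_zero).mp h)))

section Transform

variable {R : Type*} [CommRing R]

/-- The MacWilliams substitution `(x, y) ↦ (x + y, x - y)` on forms in `x ^ 4` and `y ^ 4` of
degree `d`. The form `∑ qᵢ (x ^ 4) ^ (d - i) (y ^ 4) ^ i` is encoded by `Q = ∑ qᵢ X ^ i`, and the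
result is dehomogenized at `x = 1`, `y = X`. -/
noncomputable def transform (d : ℕ) : R[X] →ₗ[R] R[X] :=
  (MvPolynomial.aeval ![(1 - X) ^ 4, (1 + X) ^ 4]).toLinearMap ∘ₗ homogenizeLM d

lemma transform_apply (d : ℕ) (Q : R[X]) : transform d Q =
    ∑ p ∈ antidiagonal d, C (Q.coeff p.1) * ((1 - X) ^ 4) ^ p.1 * ((1 + X) ^ 4) ^ p.2 := by
  simp [transform, homogenizeLM, homogenize, MvPolynomial.aeval_monomial, mul_assoc]

lemma transform_X_pow {i d : ℕ} (h : i ≤ d) :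
    transform d (X ^ i : R[X]) = ((1 - X) ^ 4) ^ i * ((1 + X) ^ 4) ^ (d - i) := by
  simp [transform, homogenizeLM, homogenize_X_pow h]

lemma transform_mul {m n : ℕ} {P Q : R[X]} (hP : P.natDegree ≤ m) (hQ : Q.natDegree ≤ n) :
    transform (m + n) (P * Q) = transform m P * transform n Q := by
  simp [transform, homogenizeLM, homogenize_mul P Q hP hQ]

lemma transform_pow {m : ℕ} {P : R[X]} (hP : P.natDegree ≤ m) (n : ℕ) :
    transform (n * m) (P ^ n) = transform m P ^ n := by
  induction n with
  | zero => simpa using transform_X_pow (R := R) (le_refl 0)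
  | succ n ih =>
    rw [pow_succ, Nat.succ_mul, transform_mul (natDegree_pow_le_of_le n hP) hP, ih, pow_succ]

lemma eval_neg_one_transform (d : ℕ) (Q : R[X]) :
    (transform d Q).eval (-1) = Q.coeff d * 16 ^ d := by
  rw [transform_apply, eval_finsetSum, Finset.sum_eq_single (d, 0)]
  · norm_num
  · rintro ⟨i, k⟩ hik hne
    have hk : k ≠ 0 := by
      rintro rfl
      exact hne (by simpa using hik)
    simp [hk]
  · simp

/-- The univariate encodings of the forms of degree `8 * j` in `x ^ 4` and `y ^ 4` that are
multiplied by `16 ^ j` under the MacWilliams substitution. -/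
noncomputable def invariants (R : Type*) [CommRing R] (j : ℕ) : Submodule R R[X] :=
  degreeLE R (2 * j : ℕ) ⊓
    LinearMap.eqLocus (transform (2 * j)) ((16 ^ j : R) • (expand R 4).toLinearMap)

lemma mem_invariants_iff {j : ℕ} {Q : R[X]} : Q ∈ invariants R j ↔
    Q.natDegree ≤ 2 * j ∧ transform (2 * j) Q = C (16 ^ j) * expand R 4 Q := by
  simp [invariants, mem_degreeLE, natDegree_le_iff_degree_le, smul_eq_C_mul]

lemma mul_mem_invariants {i j : ℕ} {P Q : R[X]} (hP : P ∈ invariants R i)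
    (hQ : Q ∈ invariants R j) : P * Q ∈ invariants R (i + j) := by
  rw [mem_invariants_iff] at *
  refine ⟨natDegree_mul_le.trans (by omega), ?_⟩
  rw [mul_add, transform_mul hP.1 hQ.1, hP.2, hQ.2, pow_add, C_mul, map_mul]
  ring

lemma pow_mem_invariants {j : ℕ} {P : R[X]} (hP : P ∈ invariants R j) (n : ℕ) :
    P ^ n ∈ invariants R (n * j) := by
  induction n with
  | zero => simpa [mem_invariants_iff] using transform_X_pow (R := R) (le_refl 0)
  | succ n ih => simpa only [pow_succ, Nat.succ_mul] using mul_mem_invariants ih hP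

lemma mem_invariants_of_mul_mem [IsDomain R] {i j : ℕ} {P Q : R[X]} (hP : P ∈ invariants R i)
    (hP0 : P ≠ 0) (h16 : (16 : R) ≠ 0) (hQ : Q.natDegree ≤ 2 * j)
    (hPQ : P * Q ∈ invariants R (i + j)) : Q ∈ invariants R j := by
  rw [mem_invariants_iff] at *
  refine ⟨hQ, ?_⟩
  have hfactor : C (16 ^ i) * expand R 4 P ≠ 0 :=
    mul_ne_zero (C_ne_zero.mpr (pow_ne_zero _ h16)) ((expand_ne_zero (by norm_num)).mpr hP0)
  apply mul_left_cancel₀ hfactor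
  rw [← hP.2, ← transform_mul hP.1 hQ, ← mul_add, hPQ.2, hP.2, pow_add, C_mul, map_mul]
  ring

/-- The weight enumerator `x ^ 8 + 14 * x ^ 4 * y ^ 4 + y ^ 8` of the extended Hamming code of
length 8, at `x = 1` and `y ^ 4 = X`. -/
noncomputable def hammingEnum (R : Type*) [CommRing R] : R[X] := 1 + 14 * X + X ^ 2

/-- Gleason's invariant `x ^ 4 * y ^ 4 * (x ^ 4 - y ^ 4) ^ 4` of degree 24, at `x = 1` and
`y ^ 4 = X`. -/
noncomputable def gleasonDisc (R : Type*) [CommRing R] : R[X] := X * (X - 1) ^ 4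

lemma hammingEnum_mem_invariants : hammingEnum R ∈ invariants R 1 := by
  have htransform : transform 2 (hammingEnum R) =
      (1 + X) ^ 8 + 14 * ((1 - X) ^ 4 * (1 + X) ^ 4) + (1 - X) ^ 8 := by
    have h14 : (14 : R[X]) * X = (14 : R) • X ^ 1 := by
      rw [smul_eq_C_mul, pow_one]; rfl
    rw [hammingEnum, h14, ← pow_zero X, map_add, map_add, map_smul, transform_X_pow (by norm_num),
      transform_X_pow (by norm_num), transform_X_pow (by norm_num), smul_eq_C_mul]
    simp only [map_ofNat]
    ring
  rw [mem_invariants_iff]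
  refine ⟨by rw [hammingEnum]; compute_degree, ?_⟩
  rw [mul_one, htransform, pow_one, map_ofNat]
  simp only [hammingEnum, map_add, map_mul, map_one, map_ofNat, map_pow, expand_X]
  ring

lemma gleasonDisc_mem_invariants : gleasonDisc R ∈ invariants R 3 := by
  have hX : transform 2 (X : R[X]) = (1 - X) ^ 4 * (1 + X) ^ 4 := by
    simpa using transform_X_pow (R := R) (i := 1) (d := 2) (by norm_num)
  have hX_sub_one : transform 1 (X - 1 : R[X]) = (1 - X) ^ 4 - (1 + X) ^ 4 := by
    rw [map_sub, ← pow_one X, ← pow_zero X, transform_X_pow le_rfl, transform_X_pow (by norm_num)]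
    simp
  rw [mem_invariants_iff]
  refine ⟨by rw [gleasonDisc]; compute_degree!, ?_⟩
  calc transform (2 * 3) (gleasonDisc R)
      = transform 2 X * transform (4 * 1) ((X - 1) ^ 4) :=
        transform_mul (m := 2) (n := 4 * 1) (natDegree_X_le.trans one_le_two) (by compute_degree)
    _ = C (16 ^ 3) * expand R 4 (gleasonDisc R) := by
        rw [transform_pow (by compute_degree), hX, hX_sub_one]
        simp only [gleasonDisc, map_sub, map_mul, map_one, map_ofNat, map_pow, expand_X]
        ring

lemma natDegree_gleasonDisc [Nontrivial R] : (gleasonDisc R).natDegree = 5 := by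
  rw [gleasonDisc]
  compute_degree!

/-- The monomials in the two generators of Gleason's theorem that encode forms of degree
`8 * j`. -/
def gleasonMonomials (R : Type*) [CommRing R] (j : ℕ) : Set R[X] :=
  {P | ∃ r, 3 * r ≤ j ∧ P = hammingEnum R ^ (j - 3 * r) * gleasonDisc R ^ r}

end Transform

variable {K : Type*} [Field K] [NeZero (2 : K)]

variable (K) in
lemma sixteen_ne_zero : (16 : K) ≠ 0 := by
  rw [show (16 : K) = 2 ^ 4 by norm_num]
  exact pow_ne_zero 4 two_ne_zero

lemma X_sub_one_pow_four_dvd_of_mem_invariants {j : ℕ} {Q : K[X]} (hQ : Q ∈ invariants K j)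
    (h0 : Q.coeff 0 = 0) : (X - 1) ^ 4 ∣ Q := by
  have hinv := (mem_invariants_iff.mp hQ).2
  have htransform : (X - 1) ^ 4 ∣ transform (2 * j) Q := by
    rw [transform_apply]
    refine Finset.dvd_sum fun p _ => ?_
    rcases eq_or_ne p.1 0 with hp | hp
    · simp [hp, h0]
    · rw [show (X - 1 : K[X]) ^ 4 = (1 - X) ^ 4 by ring]
      exact ((dvd_pow_self _ hp).mul_left _).mul_right _
  have hunit : IsUnit (C (16 ^ j) : K[X]) := isUnit_C.mpr ((sixteen_ne_zero K).isUnit.pow j)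
  rw [hinv, hunit.dvd_mul_left] at htransform
  refine X_sub_one_pow_dvd_of_dvd_expand ?_ htransform
  rw [show ((4 : ℕ) : K) = 2 ^ 2 by norm_num]
  exact pow_ne_zero 2 two_ne_zero

lemma natDegree_lt_of_mem_invariants {j : ℕ} {Q : K[X]} (hQ : Q ∈ invariants K j) (hQ0 : Q ≠ 0)
    (h1 : Q.eval 1 = 0) : Q.natDegree < 2 * j := by
  obtain ⟨hdeg, hinv⟩ := mem_invariants_iff.mp hQ
  have hcoeff : Q.coeff (2 * j) = 0 := by
    have heval := eval_neg_one_transform (2 * j) Q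
    rw [hinv, eval_mul, expand_eval, Even.neg_one_pow (by decide), h1, mul_zero] at heval
    exact (mul_eq_zero.mp heval.symm).resolve_right (pow_ne_zero _ (sixteen_ne_zero K))
  refine lt_of_le_of_ne hdeg fun h => hQ0 ?_
  rwa [← h, coeff_natDegree, leadingCoeff_eq_zero] at hcoeff

lemma exists_eq_gleasonDisc_mul {j : ℕ} {Q : K[X]} (hQ : Q ∈ invariants K j) (hQ0 : Q ≠ 0)
    (h0 : Q.coeff 0 = 0) :
    ∃ i, ∃ P ∈ invariants K i, j = 3 + i ∧ Q = gleasonDisc K * P := by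
  have hdvd : gleasonDisc K ∣ Q := by
    refine IsCoprime.mul_dvd (IsCoprime.pow_right ⟨1, -1, by ring⟩) (X_dvd_iff.mpr h0)
      (X_sub_one_pow_four_dvd_of_mem_invariants hQ h0)
  obtain ⟨P, rfl⟩ := hdvd
  have hlt := natDegree_lt_of_mem_invariants hQ hQ0 (by simp [gleasonDisc])
  have hdeg : (gleasonDisc K * P).natDegree = 5 + P.natDegree := by
    rw [natDegree_mul (left_ne_zero_of_mul hQ0) (right_ne_zero_of_mul hQ0), natDegree_gleasonDisc]
  obtain ⟨i, rfl⟩ : ∃ i, j = 3 + i := ⟨j - 3, by omega⟩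
  exact ⟨i, P, mem_invariants_of_mul_mem gleasonDisc_mem_invariants (left_ne_zero_of_mul hQ0)
    (sixteen_ne_zero K) (by omega) hQ, rfl, rfl⟩

theorem invariants_le_span_gleasonMonomials (j : ℕ) :
    invariants K j ≤ Submodule.span K (gleasonMonomials K j) := by
  induction j using Nat.strong_induction_on with
  | _ j ih =>
  intro Q hQ
  have hham : hammingEnum K ^ j ∈ invariants K j := by
    simpa using pow_mem_invariants hammingEnum_mem_invariants j
  have hspan : hammingEnum K ^ j ∈ Submodule.span K (gleasonMonomials K j) :=
    Submodule.subset_span ⟨0, by simp⟩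
  suffices hrest : Q - Q.coeff 0 • hammingEnum K ^ j ∈
      Submodule.span K (gleasonMonomials K j) by
    simpa using add_mem hrest (Submodule.smul_mem _ (Q.coeff 0) hspan)
  rcases eq_or_ne (Q - Q.coeff 0 • hammingEnum K ^ j) 0 with h | h
  · rw [h]
    exact zero_mem _
  have hcoeff : (Q - Q.coeff 0 • hammingEnum K ^ j).coeff 0 = 0 := by
    simp [coeff_zero_eq_eval_zero, hammingEnum]
  obtain ⟨i, P, hP, rfl, hPQ⟩ := exists_eq_gleasonDisc_mul
    (sub_mem hQ (Submodule.smul_mem _ _ hham)) h hcoeff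
  rw [hPQ, ← LinearMap.mulLeft_apply (R := K), ← Submodule.mem_comap]
  refine Submodule.span_le.mpr ?_ (ih i (by omega) hP)
  rintro _ ⟨r, hr, rfl⟩
  refine Submodule.subset_span ⟨r + 1, by omega, ?_⟩
  rw [LinearMap.mulLeft_apply, show 3 + i - 3 * (r + 1) = i - 3 * r by omega]
  ring

end Gleason

section Lagrange

open PowerSeries

lemma coeff_X_mul_derivative {R : Type*} [CommSemiring R] (f : R⟦X⟧) (n : ℕ) :
    coeff n (X * d⁄dX R f) = n * coeff n f := by
  cases n with
  | zero => simp
  | succ n => rw [coeff_succ_X_mul, coeff_derivative, mul_comm, Nat.cast_succ]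

/-- Lagrange inversion in the form `[t ^ m] (t ^ r)' = 0`, read in the uniformizer
`φ = X / ψ`. -/
lemma coeff_derivative_pow_mul_pow_eq_zero {R : Type*} [CommRing R] [IsDomain R] [CharZero R]
    {φ ψ : R⟦X⟧} (h : φ * ψ = X) {r m : ℕ} (hr : r ≤ m) :
    coeff m (d⁄dX R (φ ^ r) * ψ ^ (m + 1)) = 0 := by
  obtain _ | r := r
  · simp
  obtain ⟨d, rfl⟩ := Nat.exists_eq_add_of_le hr
  have hderiv : d⁄dX R φ * ψ = 1 - φ * d⁄dX R ψ := by
    have := congrArg (d⁄dX R) h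
    rw [Derivation.leibniz, derivative_X, smul_eq_mul, smul_eq_mul] at this
    linear_combination this
  have hexact : (d + 1) • (d⁄dX R (φ ^ (r + 1)) * ψ ^ (r + 1 + d + 1)) =
      (r + 1) • (X ^ r * ((d + 1) • ψ ^ (d + 1) - X * d⁄dX R (ψ ^ (d + 1)))) := by
    rw [derivative_pow, derivative_pow, ← h, Nat.add_sub_cancel, Nat.add_sub_cancel]
    simp only [nsmul_eq_mul]
    linear_combination ((r + 1 : ℕ) : R⟦X⟧) * (d + 1 : ℕ) * φ ^ r * ψ ^ (r + 1 + d) * hderiv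
  have hcoeff := congrArg (coeff (d + 1 + r)) hexact
  rw [map_nsmul, map_nsmul, coeff_X_pow_mul, map_sub, coeff_X_mul_derivative, map_nsmul,
    nsmul_eq_mul, nsmul_eq_mul, nsmul_eq_mul, sub_self, mul_zero,
    show d + 1 + r = r + 1 + d by ring] at hcoeff
  exact (mul_eq_zero.mp hcoeff).resolve_left (Nat.cast_ne_zero.mpr d.succ_ne_zero)

lemma X_pow_dvd_derivative {R : Type*} [CommSemiring R] {f : R⟦X⟧} {n : ℕ} (h : X ^ (n + 1) ∣ f) :
    X ^ n ∣ d⁄dX R f := by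
  rw [X_pow_dvd_iff] at *
  intro i hi
  rw [coeff_derivative, h _ (by omega), zero_mul]

section PositiveCoefficients

variable {R : Type*} [Semiring R] [PartialOrder R] [IsStrictOrderedRing R]

lemma coeff_mul_pos {f g : R⟦X⟧} (hf : ∀ n, 0 ≤ coeff n f) (hf0 : 0 < coeff 0 f)
    (hg : ∀ n, 0 < coeff n g) (n : ℕ) : 0 < coeff n (f * g) := by
  rw [coeff_mul]
  refine Finset.sum_pos' (fun p _ => mul_nonneg (hf _) (hg _).le) ⟨(0, n), by simp, ?_⟩
  exact mul_pos hf0 (hg n)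

lemma coeff_pow_mul_pos {f g : R⟦X⟧} (hf : ∀ n, 0 ≤ coeff n f) (hf0 : 0 < coeff 0 f)
    (hg : ∀ n, 0 < coeff n g) (k n : ℕ) : 0 < coeff n (f ^ k * g) := by
  induction k generalizing n with
  | zero => simpa using hg n
  | succ k ih => simpa only [pow_succ', mul_assoc] using coeff_mul_pos hf hf0 ih n

end PositiveCoefficients

lemma coeff_mk_one_pow_pos {R : Type*} [CommRing R] [PartialOrder R] [IsStrictOrderedRing R]
    {k : ℕ} (hk : 0 < k) (n : ℕ) : 0 < coeff n ((PowerSeries.mk 1 : R⟦X⟧) ^ k) := by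
  obtain ⟨d, rfl⟩ := Nat.exists_eq_add_of_lt hk
  rw [Nat.zero_add, mk_one_pow_eq_mk_choose_add, coeff_mk]
  exact_mod_cast Nat.choose_pos (Nat.le_add_right d n)

section Burmann

variable {K : Type*} [Field K] [CharZero K]

variable (K) in
lemma hammingEnum_mul_inv : (hammingEnum K : K⟦X⟧) * (hammingEnum K : K⟦X⟧)⁻¹ = 1 :=
  PowerSeries.mul_inv_cancel _ (by simp [hammingEnum])

variable (K) in
lemma gleasonDisc_mul_inv_pow_mul_eq_X :
    (gleasonDisc K : K⟦X⟧) * (hammingEnum K : K⟦X⟧)⁻¹ ^ 3 *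
      ((hammingEnum K : K⟦X⟧) ^ 3 * PowerSeries.mk 1 ^ 4) = X := by
  have hdisc : (gleasonDisc K : K⟦X⟧) = X * (1 - X) ^ 4 := by
    rw [gleasonDisc]
    push_cast
    ring
  calc _ = ((hammingEnum K : K⟦X⟧) * (hammingEnum K : K⟦X⟧)⁻¹) ^ 3 *
        (PowerSeries.mk 1 * (1 - X)) ^ 4 * X := by rw [hdisc]; ring
    _ = X := by
      rw [hammingEnum_mul_inv, mk_one_mul_one_sub_eq_one, one_pow, one_pow, one_mul, one_mul]

lemma coeff_derivative_mul_eq_zero_of_mem_invariants {j m : ℕ} (hjm : j < 3 * (m + 1))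
    {Q : Polynomial K} (hQ : Q ∈ invariants K j) :
    coeff m (d⁄dX K (Q * (hammingEnum K : K⟦X⟧)⁻¹ ^ j) *
      ((hammingEnum K : K⟦X⟧) ^ 3 * PowerSeries.mk 1 ^ 4) ^ (m + 1)) = 0 := by
  set F := (hammingEnum K : K⟦X⟧)
  set G := (gleasonDisc K : K⟦X⟧)
  have hspan := invariants_le_span_gleasonMonomials j hQ
  clear hQ
  induction hspan using Submodule.span_induction with
  | mem P hP =>
    obtain ⟨r, hr, rfl⟩ := hP
    have hpow : ((hammingEnum K ^ (j - 3 * r) * gleasonDisc K ^ r : Polynomial K) : K⟦X⟧) *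
        F⁻¹ ^ j = (G * F⁻¹ ^ 3) ^ r := by
      obtain ⟨d, rfl⟩ := Nat.exists_eq_add_of_le hr
      rw [Nat.add_sub_cancel_left]
      push_cast
      calc F ^ d * G ^ r * F⁻¹ ^ (3 * r + d) = (F * F⁻¹) ^ d * (G * F⁻¹ ^ 3) ^ r := by ring
        _ = (G * F⁻¹ ^ 3) ^ r := by rw [hammingEnum_mul_inv, one_pow, one_mul]
    rw [hpow]
    exact coeff_derivative_pow_mul_pow_eq_zero (gleasonDisc_mul_inv_pow_mul_eq_X K) (by omega)
  | zero => simp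
  | add P Q _ _ hP hQ =>
    rw [Polynomial.coe_add, add_mul, map_add, add_mul, map_add, hP, hQ, add_zero]
  | smul a P _ hP =>
    rw [Polynomial.coe_smul, smul_mul_assoc, Derivation.map_smul, smul_mul_assoc, map_smul, hP,
      smul_zero]

lemma coeff_derivative_inv_pow_mul_eq_zero {j m : ℕ} (hjm : j < 3 * (m + 1)) {U : Polynomial K}
    (hU : 1 + Polynomial.X ^ (m + 2) * U ∈ invariants K j) :
    coeff m (d⁄dX K ((hammingEnum K : K⟦X⟧)⁻¹ ^ j) *
      ((hammingEnum K : K⟦X⟧) ^ 3 * PowerSeries.mk 1 ^ 4) ^ (m + 1)) = 0 := by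
  have hsplit : ((1 + Polynomial.X ^ (m + 2) * U : Polynomial K) : K⟦X⟧) *
      (hammingEnum K : K⟦X⟧)⁻¹ ^ j = (hammingEnum K : K⟦X⟧)⁻¹ ^ j +
        X ^ (m + 2) * ((U : K⟦X⟧) * (hammingEnum K : K⟦X⟧)⁻¹ ^ j) := by
    push_cast
    ring
  have hzero := coeff_derivative_mul_eq_zero_of_mem_invariants hjm hU
  rwa [hsplit, map_add, add_mul, map_add, add_eq_left.mpr] at hzero
  exact X_pow_dvd_iff.mp ((X_pow_dvd_derivative (dvd_mul_right _ _)).mul_right _) m m.lt_succ_self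

end Burmann

section Positivity

variable {K : Type*} [Field K] [LinearOrder K] [IsStrictOrderedRing K]

lemma coeff_hammingEnum_nonneg (n : ℕ) : 0 ≤ (hammingEnum K).coeff n := by
  rw [hammingEnum, Polynomial.coeff_add, Polynomial.coeff_add, Polynomial.coeff_one,
    Polynomial.coeff_ofNat_mul, Polynomial.coeff_X, Polynomial.coeff_X_pow]
  positivity

lemma coeff_derivative_hammingEnum_mul_pos (k : ℕ) {l : ℕ} (hl : 0 < l) (n : ℕ) :
    0 < coeff n (d⁄dX K (hammingEnum K) * ((hammingEnum K : K⟦X⟧) ^ k * PowerSeries.mk 1 ^ l)) := by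
  have hnonneg (i : ℕ) : 0 ≤ coeff i (hammingEnum K : K⟦X⟧) := by
    simpa using coeff_hammingEnum_nonneg i
  refine coeff_mul_pos (fun i => ?_) ?_
    (coeff_pow_mul_pos hnonneg ?_ (coeff_mk_one_pow_pos hl) k) n
  · rw [coeff_derivative]
    exact mul_nonneg (hnonneg _) (by positivity)
  · simp [hammingEnum]
  · simp [hammingEnum]

theorem one_add_X_pow_mul_notMem_invariants {j m : ℕ} (hj : 0 < j) (hjm : j < 3 * (m + 1))
    (U : Polynomial K) : 1 + Polynomial.X ^ (m + 2) * U ∉ invariants K j := by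
  intro hU
  have hzero := coeff_derivative_inv_pow_mul_eq_zero hjm hU
  set F := (hammingEnum K : K⟦X⟧)
  have hexpand : d⁄dX K (F⁻¹ ^ j) * (F ^ 3 * PowerSeries.mk 1 ^ 4) ^ (m + 1) =
      -(j • (d⁄dX K F * (F ^ (3 * m + 2 - j) * PowerSeries.mk 1 ^ (4 * (m + 1))))) := by
    obtain ⟨i, rfl⟩ : ∃ i, j = i + 1 := ⟨j - 1, by omega⟩
    obtain ⟨d, hd⟩ : ∃ d, 3 * (m + 1) = i + 2 + d := ⟨3 * m + 1 - i, by omega⟩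
    rw [show 3 * m + 2 - (i + 1) = d by omega, derivative_pow, derivative_inv', mul_pow,
      ← pow_mul, hd, nsmul_eq_mul, Nat.add_sub_cancel]
    calc _ = (F * F⁻¹) ^ (i + 2) * -(((i + 1 : ℕ) : K⟦X⟧) * (d⁄dX K F *
          (F ^ d * PowerSeries.mk 1 ^ (4 * (m + 1))))) := by ring
      _ = _ := by rw [hammingEnum_mul_inv, one_pow, one_mul]
  have hpos := coeff_derivative_hammingEnum_mul_pos (K := K) (3 * m + 2 - j)
    (l := 4 * (m + 1)) (by positivity) m
  rw [hexpand, map_neg, neg_eq_zero, map_nsmul, nsmul_eq_mul] at hzero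
  exact (mul_pos (Nat.cast_pos.mpr hj) hpos).ne' hzero

end Positivity

end Lagrange

section MallowsSloane

open Polynomial

variable {ι : Type*} [Fintype ι] {D : Submodule (ZMod 2) (ι → ZMod 2)}

/-- The weight enumerator of a set of binary words with weights divisible by four, at `x = 1` and
`y ^ 4 = X`. -/
noncomputable def quarterEnum (S : Set (ι → ZMod 2)) : ℚ[X] :=
  ∑ c ∈ S.toFinite.toFinset, X ^ (hWt c / 4)

lemma SelfDual2.ncard_eq (hD : SelfDual2 D) {j : ℕ} (hj : Fintype.card ι = 8 * j) :
    (D : Set (ι → ZMod 2)).ncard = 16 ^ j := by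
  have hsq := ncard_mul_ncard_dual2 D
  rw [← hD, hj, pow_mul, show 2 ^ 8 = 16 * 16 by rfl, mul_pow] at hsq
  exact Nat.mul_self_inj.mp hsq

lemma quarterEnum_mem_invariants (hD : SelfDual2 D) (hde : DoublyEven (D : Set (ι → ZMod 2)))
    {j : ℕ} (hj : Fintype.card ι = 8 * j) :
    quarterEnum (D : Set (ι → ZMod 2)) ∈ invariants ℚ j := by
  have hle (c : ι → ZMod 2) : hWt c ≤ 8 * j := hj ▸ hammingNorm_le_card_fintype
  have htransform : transform (2 * j) (quarterEnum (D : Set (ι → ZMod 2))) =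
      weightEnum (D : Set (ι → ZMod 2)) (1 + X) (1 - X) := by
    rw [quarterEnum, weightEnum, map_sum]
    refine Finset.sum_congr rfl fun c hc => ?_
    obtain ⟨w, hw⟩ := hde c (by simpa using hc)
    have := hle c
    rw [transform_X_pow (by omega), hj, hw, ← pow_mul, ← pow_mul, mul_comm]
    congr 2 <;> omega
  have hexpand : weightEnum (D : Set (ι → ZMod 2)) 1 X =
      expand ℚ 4 (quarterEnum (D : Set (ι → ZMod 2))) := by
    rw [quarterEnum, weightEnum, map_sum]
    refine Finset.sum_congr rfl fun c hc => ?_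
    rw [one_pow, one_mul, map_pow, expand_X, ← pow_mul,
      Nat.mul_div_cancel' (hde c (by simpa using hc))]
  refine mem_invariants_iff.mpr ⟨natDegree_sum_le_of_forall_le _ _ fun c _ => ?_, ?_⟩
  · have := hle c
    exact (natDegree_X_pow_le _).trans (by omega)
  · rw [htransform, macWilliams, ← hD, hexpand, hD.ncard_eq hj, map_pow, map_ofNat, Nat.cast_pow,
      Nat.cast_ofNat]

lemma X_pow_dvd_quarterEnum_sub_one (hde : DoublyEven (D : Set (ι → ZMod 2))) {m : ℕ}
    (hD : ∀ c ∈ D, c ≠ 0 → 4 * m + 4 < hWt c) :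
    X ^ (m + 2) ∣ quarterEnum (D : Set (ι → ZMod 2)) - 1 := by
  classical
  have hzero : X ^ (hWt (0 : ι → ZMod 2) / 4) = (1 : ℚ[X]) := by simp [hWt]
  have hmem : (0 : ι → ZMod 2) ∈ (D : Set (ι → ZMod 2)).toFinite.toFinset := by simp
  rw [quarterEnum, ← Finset.add_sum_erase _ _ hmem, hzero, add_sub_cancel_left]
  refine Finset.dvd_sum fun c hc => pow_dvd_pow _ ?_
  have hc' : c ≠ 0 ∧ c ∈ D := by simpa using hc
  have h4 := hde c hc'.2
  have hlt := hD c hc'.2 hc'.1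
  omega

theorem SelfDual2.exists_hWt_le [Nonempty ι] (h8 : 8 ∣ Fintype.card ι) (hD : SelfDual2 D)
    (hde : DoublyEven (D : Set (ι → ZMod 2))) :
    ∃ c ∈ D, c ≠ 0 ∧ hWt c ≤ 4 * (Fintype.card ι / 24) + 4 := by
  obtain ⟨j, hj⟩ := h8
  have hpos : 0 < Fintype.card ι := Fintype.card_pos
  by_contra! hlt
  obtain ⟨U, hU⟩ := X_pow_dvd_quarterEnum_sub_one hde hlt
  refine one_add_X_pow_mul_notMem_invariants (m := Fintype.card ι / 24) (j := j) (by omega)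
    (by omega) U ?_
  rw [← hU, add_sub_cancel]
  exact quarterEnum_mem_invariants hD hde hj

end MallowsSloane

section Z4

variable {ι : Type*}

/-- The group embedding of `ZMod 2 ^ n` onto `2 * ZMod 4 ^ n`. -/
def twice (v : ι → ZMod 2) : ι → ZMod 4 :=
  fun i => 2 * ((v i).val : ZMod 4)

lemma twice_ne_zero {v : ι → ZMod 2} (hv : v ≠ 0) : twice v ≠ 0 := by
  have hval (a : ZMod 2) : 2 * (a.val : ZMod 4) = 0 → a = 0 := by decide +revert
  exact fun h => hv (funext fun i => hval _ (congrFun h i))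

variable [Fintype ι] {C : Submodule (ZMod 4) (ι → ZMod 4)}

/-- The residue code of a `ZMod 4`-code as a submodule; its carrier is definitionally
`residue C`. -/
def residueCode (C : Submodule (ZMod 4) (ι → ZMod 4)) : Submodule (ZMod 2) (ι → ZMod 2) :=
  AddSubgroup.toZModSubmodule 2 (C.toAddSubgroup.map
    ((ZMod.castHom (by norm_num : 2 ∣ 4) (ZMod 2)).toAddMonoidHom.compLeft ι))

lemma natCast_hWt_res2 (x : ι → ZMod 4) : (hWt (res2 x) : ZMod 4) = x ⬝ᵥ x := by
  have hsq (a : ZMod 4) :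
      a * a = if ZMod.castHom (by norm_num : 2 ∣ 4) (ZMod 2) a ≠ 0 then 1 else 0 := by
    decide +revert
  simp only [hWt, res2, dotProduct, hsq, Finset.sum_boole]
  rfl

lemma SelfDualZ4.doublyEven_residueCode (hC : SelfDualZ4 C) :
    DoublyEven (residueCode C : Set (ι → ZMod 2)) := by
  rintro _ ⟨x, hx, rfl⟩
  have hself : x ⬝ᵥ x = 0 := (hC.subset hx : x ∈ dualZ4 _) x hx
  rw [← natCast_hWt_res2] at hself
  exact (ZMod.natCast_eq_zero_iff _ 4).mp hself

lemma leeWt_twice (v : ι → ZMod 2) : leeWt (twice v) = 2 * hWt v := by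
  have hval (a : ZMod 2) : leeVal (2 * (a.val : ZMod 4)) = 2 * a.val := by decide +revert
  simp only [leeWt, twice, hval, hWt_eq_sum_val, Finset.mul_sum]

lemma twice_mem_dualZ4 {S : Set (ι → ZMod 4)} {v : ι → ZMod 2} (hv : v ∈ dual2 (residue S)) :
    twice v ∈ dualZ4 S := by
  intro y hy
  have htwo (a : ZMod 4) : ZMod.castHom (by norm_num : 2 ∣ 4) (ZMod 2) a = 0 → 2 * a = 0 := by
    decide +revert
  have hred : ZMod.castHom (by norm_num : 2 ∣ 4) (ZMod 2) (∑ i, ((v i).val : ZMod 4) * y i) =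
      v ⬝ᵥ res2 y := by
    simp only [map_sum, map_mul, map_natCast, ZMod.natCast_zmod_val]
    rfl
  simp only [twice, mul_assoc, ← Finset.mul_sum]
  exact htwo _ (hred.trans (hv (res2 y) ⟨y, hy, rfl⟩))

lemma SelfDualZ4.minLee_le_two_mul_hWt (hC : SelfDualZ4 C) {v : ι → ZMod 2}
    (hv : v ∈ dual2 (residueCode C : Set (ι → ZMod 2))) (hv0 : v ≠ 0) :
    minLee (C : Set (ι → ZMod 4)) ≤ 2 * hWt v :=
  Nat.sInf_le ⟨twice v, hC.superset (twice_mem_dualZ4 hv), twice_ne_zero hv0, leeWt_twice v⟩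

end Z4

end Z4Note

open Z4Note in
theorem minLee_le_of_no_extremal_length24k8_general
    {ι : Type*} [Fintype ι] [Nonempty ι] (h8 : 8 ∣ Fintype.card ι)
    (hno : ¬ ∃ D : Submodule (ZMod 2) (ι → ZMod 2), SelfDual2 D ∧
      DoublyEven (D : Set (ι → ZMod 2)) ∧
      minHam (D : Set (ι → ZMod 2)) = 4 * (Fintype.card ι / 24) + 4)
    {C : Submodule (ZMod 4) (ι → ZMod 4)} (hC : SelfDualZ4 C) :
    minLee (C : Set (ι → ZMod 4)) ≤ 8 * (Fintype.card ι / 24) + 4 := by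
  by_contra! hlt
  obtain ⟨D, hCD, hde, hD⟩ := hC.doublyEven_residueCode.exists_le_selfDual2 h8
  have hwt : ∀ c ∈ D, c ≠ 0 → 4 * (Fintype.card ι / 24) + 4 ≤ hWt c := fun c hc hc0 => by
    have hdual : c ∈ dual2 (residueCode C : Set (ι → ZMod 2)) :=
      fun y hy => hD.subset hc y (hCD hy)
    have hlee := hC.minLee_le_two_mul_hWt hdual hc0
    have h4 := hde c hc
    omega
  obtain ⟨c, hc, hc0, hle⟩ := hD.exists_hWt_le h8 hde
  refine hno ⟨D, hD, hde, IsLeast.csInf_eq ⟨⟨c, hc, hc0, hle.antisymm (hwt c hc hc0)⟩, ?_⟩⟩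
  rintro _ ⟨x, hx, hx0, rfl⟩
  exact hwt x hx hx0

open Z4Note in
/-- if there is no binary extremal doubly even self-dual code of length
`24k+8`, then no self-dual `ZMod 4`-code of length `24k+8` has minimum Lee weight
`8k+6` or `8k+8`, and (with Rains's bound) its minimum Lee weight is at most `8k+4`. -/
theorem minLee_le_of_no_extremal_length24k8
    (k : ℕ) (hk : 0 < k)
    (hno : ¬ ∃ D : Submodule (ZMod 2) (Fin (24 * k + 8) → ZMod 2),
        SelfDual2 D ∧ DoublyEven (D : Set (Fin (24 * k + 8) → ZMod 2)) ∧
        minHam (D : Set (Fin (24 * k + 8) → ZMod 2)) = 4 * k + 4)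
    (C : Submodule (ZMod 4) (Fin (24 * k + 8) → ZMod 4)) (hsd : SelfDualZ4 C) :
    (minLee (C : Set (Fin (24 * k + 8) → ZMod 4)) ≠ 8 * k + 6 ∧
     minLee (C : Set (Fin (24 * k + 8) → ZMod 4)) ≠ 8 * k + 8) ∧
    minLee (C : Set (Fin (24 * k + 8) → ZMod 4)) ≤ 8 * k + 4 := by
  have hcard : Fintype.card (Fin (24 * k + 8)) / 24 = k := by
    rw [Fintype.card_fin]
    omega
  have hle := minLee_le_of_no_extremal_length24k8_general (by rw [Fintype.card_fin]; omega)
    (by rwa [hcard]) hsd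
  rw [hcard] at hle
  omega
end

section
/- The three bordered double circulant Z4-codes of length 24 determined by (α,β,γ) = (0,1,1) and circulant first rows (1,3,1,0,3,3,0,3,2,2,2), (0,1,1,3,0,3,3,2,3,2,2) and (3,1,0,3,0,0,0,1,3,3,2) respectively are self-dual Type I Z4-codes of length 24 with minimum Lee weight 10, and they are pairwise inequivalent. In particular, there are at least three inequivalent bordered double circulant Type I Z4-codes of length 24 and minimum Lee weight 10. -/
open Finset

/-!
If `B * Bᵀ = -1` over `ZMod 4`, then `(I | B)` and `(-Bᵀ | I)` generate the same code, and this code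
is self-dual. It is not of Type II here, as the first row of `(I | B)` has Euclidean weight 12.

A word of Lee weight at most 10 has Lee weight at most 5 on its left half or at most 4 on its right
half, so it is a combination with small coefficient vector of the rows of one of the two matrices.
This makes the list of all such words computable in the kernel. To this end a word is stored as a
natural number, with its entries as base-256 digits, and arithmetic on numbers acts on all the
coordinates at once.

The codes are told apart by the number of ordered pairs of words of Lee weight 10 whose sum has Lee
weight 12, each pair counted once for every coordinate at which both words have entry 2. This number
is 8272, 7744 and 9328 respectively.
-/

namespace Z4Note

section Lee

variable {ι κ : Type*} [Fintype ι] [Fintype κ]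

theorem leeVal_eq_zero_iff {a : ZMod 4} : leeVal a = 0 ↔ a = 0 := by decide +revert

theorem leeVal_le_two (a : ZMod 4) : leeVal a ≤ 2 := by decide +revert

theorem leeWt_eq_zero_iff {x : ι → ZMod 4} : leeWt x = 0 ↔ x = 0 := by
  simp only [leeWt, sum_eq_zero_iff, mem_univ, true_imp_iff, leeVal_eq_zero_iff, funext_iff,
    Pi.zero_apply]

theorem leeWt_sum (x : ι ⊕ κ → ZMod 4) : leeWt x = leeWt (x ∘ Sum.inl) + leeWt (x ∘ Sum.inr) :=
  Fintype.sum_sum_type _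

end Lee

section Systematic

open Matrix

variable {R κ ι : Type*} [CommRing R] [Fintype κ] [DecidableEq κ]

/-- The linear code with systematic generator matrix `(I | B)`. -/
def systematicCode (B : Matrix κ ι R) : Submodule R (κ ⊕ ι → R) :=
  Submodule.span R (Set.range (fromCols 1 B).row)

theorem mem_systematicCode_iff {B : Matrix κ ι R} {x : κ ⊕ ι → R} :
    x ∈ systematicCode B ↔ x ∘ Sum.inr = (x ∘ Sum.inl) ᵥ* B := by
  have mem_iff : x ∈ systematicCode B ↔ ∃ u, u ᵥ* fromCols 1 B = x := by
    simp only [vecMul_eq_sum]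
    exact Submodule.mem_span_range_iff_exists_fun R
  simp only [mem_iff, vecMul_fromCols, vecMul_one]
  constructor
  · rintro ⟨u, rfl⟩
    rfl
  · intro h
    exact ⟨x ∘ Sum.inl, by rw [← h, Sum.elim_comp_inl_inr]⟩

theorem bdcCode_eq_systematicCode {m : ℕ} (α β γ : ZMod 4) (r : Fin m → ZMod 4) :
    bdcCode α β γ r = systematicCode (of (bdcB α β γ r)) := by
  have rows : bdcRow α β γ r = (fromCols 1 (of (bdcB α β γ r))).row := by
    ext i (j | j)
    · simp only [bdcRow, Sum.elim_inl, row_apply, fromCols_apply_inl, one_apply, eq_comm]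
    · rfl
  rw [bdcCode, systematicCode, rows]

theorem mem_systematicCode_iff_of_mul_transpose {B : Matrix κ κ R} (h : B * Bᵀ = -1)
    {x : κ ⊕ κ → R} :
    x ∈ systematicCode B ↔ x ∘ Sum.inl = (x ∘ Sum.inr) ᵥ* -Bᵀ := by
  have inverse : -Bᵀ * B = 1 := by rw [← mul_eq_one_comm, mul_neg, h, neg_neg]
  rw [mem_systematicCode_iff]
  constructor <;> intro hx <;> rw [hx, vecMul_vecMul]
  · rw [mul_eq_one_comm.mp inverse, vecMul_one]
  · rw [inverse, vecMul_one]

theorem mem_dualZ4_systematicCode_iff {B : Matrix κ κ (ZMod 4)} {x : κ ⊕ κ → ZMod 4} :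
    x ∈ dualZ4 (systematicCode B : Set (κ ⊕ κ → ZMod 4)) ↔
      x ∘ Sum.inl = (x ∘ Sum.inr) ᵥ* -Bᵀ := by
  have mem_iff : x ∈ dualZ4 (systematicCode B : Set (κ ⊕ κ → ZMod 4)) ↔
      ∀ u, (x ∘ Sum.inl + (x ∘ Sum.inr) ᵥ* Bᵀ) ⬝ᵥ u = 0 := by
    constructor
    · intro hx u
      have hu : Sum.elim u (u ᵥ* B) ∈ systematicCode B := mem_systematicCode_iff.mpr rfl
      rw [add_dotProduct, vecMul_transpose, dotProduct_comm (B *ᵥ _), dotProduct_mulVec,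
        dotProduct_comm (u ᵥ* B), ← hx _ hu, Fintype.sum_sum_type]
      rfl
    · intro hx y hy
      rw [← hx (y ∘ Sum.inl), add_dotProduct, vecMul_transpose, dotProduct_comm (B *ᵥ _),
        dotProduct_mulVec, ← mem_systematicCode_iff.mp hy, dotProduct_comm (y ∘ Sum.inr),
        Fintype.sum_sum_type]
      rfl
  rw [mem_iff, dotProduct_eq_zero_iff, vecMul_neg, ← add_eq_zero_iff_eq_neg]

theorem selfDualZ4_systematicCode {B : Matrix κ κ (ZMod 4)} (h : B * Bᵀ = -1) :
    SelfDualZ4 (systematicCode B) := by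
  ext x
  rw [SetLike.mem_coe, mem_systematicCode_iff_of_mul_transpose h, mem_dualZ4_systematicCode_iff]

end Systematic

section TypeI

theorem eucWt_bdcRow_zero {m : ℕ} (α β γ : ZMod 4) (r : Fin m → ZMod 4) :
    eucWt (bdcRow α β γ r 0) = 1 + leeVal α ^ 2 + m * leeVal β ^ 2 := by
  simp [eucWt, bdcRow, bdcB, Fintype.sum_sum_type, Fin.sum_univ_succ, leeVal,
    ZMod.val_one_eq_one_mod, add_assoc]

theorem not_typeII_bdcCode {m : ℕ} {α β : ZMod 4}
    (h : ¬ 8 ∣ 1 + leeVal α ^ 2 + m * leeVal β ^ 2) (γ : ZMod 4) (r : Fin m → ZMod 4) :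
    ¬ TypeII (bdcCode α β γ r : Set (Fin (m + 1) ⊕ Fin (m + 1) → ZMod 4)) := fun hII =>
  h (eucWt_bdcRow_zero α β γ r ▸ hII _ (Submodule.subset_span (Set.mem_range_self 0)))

end TypeI

section Equivalence

variable {ι : Type*}

/-- The signed coordinate permutation by which `Z4Equiv` relates codes. -/
def signedPerm (σ : Equiv.Perm ι) (ε : ι → ZMod 4) (x : ι → ZMod 4) : ι → ZMod 4 :=
  fun i => ε i * x (σ i)

variable {σ : Equiv.Perm ι} {ε : ι → ZMod 4}

theorem signedPerm_add (x y : ι → ZMod 4) :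
    signedPerm σ ε (x + y) = signedPerm σ ε x + signedPerm σ ε y :=
  funext fun _ => mul_add _ _ _

theorem signedPerm_apply_eq_two_iff (hε : ∀ i, ε i = 1 ∨ ε i = -1) (x : ι → ZMod 4) (i : ι) :
    signedPerm σ ε x i = 2 ↔ x (σ i) = 2 := by
  have two_iff : ∀ e a : ZMod 4, e = 1 ∨ e = -1 → (e * a = 2 ↔ a = 2) := by decide
  exact two_iff _ _ (hε i)

theorem signedPerm_injective (hε : ∀ i, ε i = 1 ∨ ε i = -1) :
    Function.Injective (signedPerm σ ε) := by
  have mul_cancel : ∀ e a b : ZMod 4, e = 1 ∨ e = -1 → e * a = e * b → a = b := by decide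
  intro x y h
  funext i
  simpa only [Equiv.apply_symm_apply] using
    mul_cancel _ _ _ (hε (σ.symm i)) (congrFun h (σ.symm i))

variable [Fintype ι]

theorem leeWt_signedPerm (hε : ∀ i, ε i = 1 ∨ ε i = -1) (x : ι → ZMod 4) :
    leeWt (signedPerm σ ε x) = leeWt x := by
  have leeVal_sign_mul : ∀ e a : ZMod 4, e = 1 ∨ e = -1 → leeVal (e * a) = leeVal a := by decide
  calc leeWt (signedPerm σ ε x) = ∑ i, leeVal (x (σ i)) :=
        sum_congr rfl fun i _ => leeVal_sign_mul _ _ (hε i)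
    _ = leeWt x := Equiv.sum_comp σ fun i => leeVal (x i)

/-- The words of `C` of Lee weight `w` with entry `2` at coordinate `i`. -/
def wordsWithTwoAt (C : Set (ι → ZMod 4)) (w : ℕ) (i : ι) : Set (ι → ZMod 4) :=
  {x ∈ C | leeWt x = w ∧ x i = 2}

/-- The ordered pairs in `wordsWithTwoAt C w i` whose sum has Lee weight `d`. -/
def pairsWithTwoAt (C : Set (ι → ZMod 4)) (w d : ℕ) (i : ι) :
    Set ((ι → ZMod 4) × (ι → ZMod 4)) :=
  {p ∈ wordsWithTwoAt C w i ×ˢ wordsWithTwoAt C w i | leeWt (p.1 + p.2) = d}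

/-- The number of triples `(i, x, y)` where `x, y ∈ C` are of Lee weight `w`, have entry `2` at the
coordinate `i`, and have a sum of Lee weight `d`; an invariant of `C` under `Z4Equiv`. -/
noncomputable def pairCount (C : Set (ι → ZMod 4)) (w d : ℕ) : ℕ :=
  ∑ i, (pairsWithTwoAt C w d i).ncard

theorem pairsWithTwoAt_image_signedPerm (hε : ∀ i, ε i = 1 ∨ ε i = -1) (C : Set (ι → ZMod 4))
    (w d : ℕ) (i : ι) :
    pairsWithTwoAt (signedPerm σ ε '' C) w d i =
      Prod.map (signedPerm σ ε) (signedPerm σ ε) '' pairsWithTwoAt C w d (σ i) := by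
  have mem_iff (x) : signedPerm σ ε x ∈ wordsWithTwoAt (signedPerm σ ε '' C) w i ↔
      x ∈ wordsWithTwoAt C w (σ i) := by
    simp only [wordsWithTwoAt, Set.mem_sep_iff, (signedPerm_injective hε).mem_set_image,
      leeWt_signedPerm hε, signedPerm_apply_eq_two_iff hε]
  ext ⟨x', y'⟩
  constructor
  · rintro ⟨⟨hx, hy⟩, hd⟩
    obtain ⟨x, -, rfl⟩ := hx.1
    obtain ⟨y, -, rfl⟩ := hy.1
    refine ⟨(x, y), ⟨⟨(mem_iff x).mp hx, (mem_iff y).mp hy⟩, ?_⟩, rfl⟩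
    rwa [← signedPerm_add, leeWt_signedPerm hε] at hd
  · rintro ⟨⟨x, y⟩, ⟨⟨hx, hy⟩, hd⟩, h⟩
    obtain ⟨rfl, rfl⟩ := Prod.mk.inj h
    refine ⟨⟨(mem_iff x).mpr hx, (mem_iff y).mpr hy⟩, ?_⟩
    rwa [← signedPerm_add, leeWt_signedPerm hε]

theorem Z4Equiv.pairCount_eq {C C' : Set (ι → ZMod 4)} (h : Z4Equiv C C') (w d : ℕ) :
    pairCount C' w d = pairCount C w d := by
  obtain ⟨σ, ε, hε, rfl⟩ := h
  have ncard_eq (i) : (pairsWithTwoAt (signedPerm σ ε '' C) w d i).ncard =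
      (pairsWithTwoAt C w d (σ i)).ncard := by
    rw [pairsWithTwoAt_image_signedPerm hε, Set.ncard_image_of_injective]
    exact (signedPerm_injective hε).prodMap (signedPerm_injective hε)
  exact (sum_congr rfl fun i _ => ncard_eq i).trans
    (Equiv.sum_comp σ fun i => (pairsWithTwoAt C w d i).ncard)

end Equivalence

section LightSums

/-- Prepends to `t` all sums `s + ∑ i, (k i).val * g i`, where `g` lists the generators and the
coefficient vector `k` over `ZMod 4` has Lee weight at most the second argument. -/
def lightSums : List ℕ → ℕ → ℕ → List ℕ → List ℕ
  | [], _, s, t => s :: t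
  | _ :: _, 0, s, t => s :: t
  | g :: gs, 1, s, t => lightSums gs 0 (s + g) (lightSums gs 0 (s + 3 * g) (lightSums gs 1 s t))
  | g :: gs, w + 2, s, t =>
    lightSums gs w (s + 2 * g)
      (lightSums gs (w + 1) (s + g) (lightSums gs (w + 1) (s + 3 * g) (lightSums gs (w + 2) s t)))

theorem exists_leeWt_le_succ {n : ℕ} (w : ℕ) (p : (Fin (n + 1) → ZMod 4) → Prop) :
    (∃ k, leeWt k ≤ w ∧ p k) ↔
      (∃ k, leeWt k ≤ w ∧ p (Fin.cons 0 k)) ∨ (∃ k, leeWt k + 1 ≤ w ∧ p (Fin.cons 3 k)) ∨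
        (∃ k, leeWt k + 1 ≤ w ∧ p (Fin.cons 1 k)) ∨ ∃ k, leeWt k + 2 ≤ w ∧ p (Fin.cons 2 k) := by
  have leeWt_cons (c : ZMod 4) (k : Fin n → ZMod 4) :
      leeWt (Fin.cons c k) = leeWt k + leeVal c := by
    simp only [leeWt, Fin.sum_univ_succ, Fin.cons_zero, Fin.cons_succ, add_comm]
  have exists_zmod (q : ZMod 4 → Prop) : (∃ c, q c) ↔ q 0 ∨ q 3 ∨ q 1 ∨ q 2 := by
    constructor
    · rintro ⟨c, hc⟩
      fin_cases c <;> tauto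
    · rintro (h | h | h | h) <;> exact ⟨_, h⟩
  simp only [Fin.exists_fin_succ_pi, leeWt_cons, exists_zmod]
  rfl

theorem mem_lightSums_ofFn {n : ℕ} (g : Fin n → ℕ) (w s : ℕ) (t : List ℕ) (a : ℕ) :
    a ∈ lightSums (List.ofFn g) w s t ↔
      a ∈ t ∨ ∃ k : Fin n → ZMod 4, leeWt k ≤ w ∧ a = s + ∑ i, (k i).val * g i := by
  induction n generalizing w s t with
  | zero => simp [lightSums, leeWt, or_comm]
  | succ n ih =>
    have val_one : (1 : ZMod 4).val = 1 := rfl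
    have val_two : (2 : ZMod 4).val = 2 := rfl
    have val_three : (3 : ZMod 4).val = 3 := rfl
    rw [List.ofFn_succ]
    match w with
    | 0 => simp [lightSums, leeWt_eq_zero_iff, or_comm]
    | 1 | w + 2 =>
      simp only [lightSums, ih, exists_leeWt_le_succ, Fin.sum_univ_succ, Fin.cons_zero,
        Fin.cons_succ]
      simp [add_assoc, or_assoc, val_one, val_two, val_three]

end LightSums

section Packing

/-- The natural number with base-256 digits `a`. -/
def pack {N : ℕ} (a : Fin N → ℕ) : ℕ := ∑ i, a i * 256 ^ (i : ℕ)

variable {N : ℕ}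

theorem pack_succ (a : Fin (N + 1) → ℕ) : pack a = 256 * pack (Fin.tail a) + a 0 := by
  simp only [pack, Fin.sum_univ_succ, Fin.val_zero, pow_zero, mul_one, Fin.val_succ, pow_succ,
    mul_sum, Fin.tail]
  rw [add_comm]
  exact congrArg (· + a 0) (sum_congr rfl fun i _ => by ring)

theorem pack_div_pow_mod {a : Fin N → ℕ} (ha : ∀ i, a i < 256) (i : Fin N) :
    pack a / 256 ^ (i : ℕ) % 256 = a i := by
  induction N with
  | zero => exact i.elim0
  | succ N ih =>
    have h0 := ha 0
    rw [pack_succ]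
    cases i using Fin.cases with
    | zero => simp only [Fin.val_zero, pow_zero]; omega
    | succ i =>
      rw [Fin.val_succ, pow_succ', ← Nat.div_div_eq_div_mul, Nat.mul_add_div (by norm_num),
        Nat.div_eq_of_lt h0, add_zero, ih (a := Fin.tail a) fun j => ha j.succ,
        Fin.tail]

theorem pack_land {a b : Fin N → ℕ} (ha : ∀ i, a i < 256) (hb : ∀ i, b i < 256) :
    pack a &&& pack b = pack fun i => a i &&& b i := by
  induction N with
  | zero => simp only [pack, univ_eq_empty, sum_empty, Nat.and_self]
  | succ N ih =>
    have tail_eq : pack (Fin.tail a) &&& pack (Fin.tail b) =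
        pack (Fin.tail fun i => a i &&& b i) := ih (fun i => ha i.succ) fun i => hb i.succ
    have hab : a 0 &&& b 0 < 2 ^ 8 := Nat.and_lt_two_pow _ (hb 0)
    rw [pack_succ, pack_succ, pack_succ, ← tail_eq]
    apply Nat.eq_of_testBit_eq
    intro j
    have split (m : ℕ) {d : ℕ} (hd : d < 2 ^ 8) := Nat.testBit_two_pow_mul_add m hd j
    rw [Nat.testBit_and, split _ (ha 0), split _ (hb 0), split _ hab]
    split_ifs <;> rw [Nat.testBit_and]

theorem pack_mod_255 {a : Fin N → ℕ} (ha : ∑ i, a i < 255) : pack a % 255 = ∑ i, a i := by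
  have modEq : pack a ≡ ∑ i, a i [MOD 255] :=
    Nat.ModEq.sum fun i _ => by
      simpa using (Nat.ModEq.refl (a i)).mul ((show 256 ≡ 1 [MOD 255] from rfl).pow (i : ℕ))
  exact Nat.mod_eq_of_modEq modEq ha

variable {ι : Type*} (e : ι ≃ Fin N)

/-- The word `x` as a natural number, with its entries as base-256 digits. -/
def packWord (x : ι → ZMod 4) : ℕ := pack fun i => (x (e.symm i)).val

/-- Masks the low two bits of each base-256 digit, and so reduces the digits modulo 4. -/
def packMask (N : ℕ) : ℕ := pack fun _ : Fin N => 3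

/-- The Lee weight of a word, computed from `s = packWord e x`. In each digit `d ≤ 3`, the Lee value
is `d &&& 3 * d`, and the digit sum in base 256 is the residue modulo 255. -/
def packedLeeWt (s : ℕ) : ℕ := (s &&& 3 * s) % 255

theorem packWord_div_pow_mod (x : ι → ZMod 4) (i : ι) :
    packWord e x / 256 ^ (e i : ℕ) % 256 = (x i).val := by
  rw [packWord, pack_div_pow_mod fun j => (ZMod.val_lt _).trans (by norm_num), e.symm_apply_apply]

theorem packWord_injective : Function.Injective (packWord e) := fun x y h => funext fun i =>
  ZMod.val_injective 4 <| by rw [← packWord_div_pow_mod e x, ← packWord_div_pow_mod e y, h]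

theorem pack_land_packMask {a : ι → ℕ} (ha : ∀ i, a i < 256) :
    (pack fun i => a (e.symm i)) &&& packMask N = packWord e fun i => (a i : ZMod 4) := by
  rw [packMask, pack_land (fun i => ha _) fun _ => by norm_num, packWord]
  congr 1
  funext i
  rw [ZMod.val_natCast, Nat.and_two_pow_sub_one_eq_mod _ 2]

theorem packWord_add_land_packMask (x y : ι → ZMod 4) :
    (packWord e x + packWord e y) &&& packMask N = packWord e (x + y) := by
  have pack_eq : packWord e x + packWord e y =
      pack fun i => (x (e.symm i)).val + (y (e.symm i)).val := by
    simp only [packWord, pack, ← sum_add_distrib, add_mul]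
  have hlt (i : ι) : (x i).val + (y i).val < 256 := by
    have hx := ZMod.val_lt (x i)
    have hy := ZMod.val_lt (y i)
    omega
  rw [pack_eq, pack_land_packMask e (a := fun i => (x i).val + (y i).val) hlt]
  simp only [Nat.cast_add, ZMod.natCast_zmod_val]
  rfl

theorem packWord_sum_land_packMask {n : ℕ} (hn : n ≤ 28) (k : Fin n → ZMod 4)
    (g : Fin n → ι → ZMod 4) :
    (∑ j, (k j).val * packWord e (g j)) &&& packMask N = packWord e (∑ j, k j • g j) := by
  have pack_eq : ∑ j, (k j).val * packWord e (g j) =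
      pack fun i => ∑ j, (k j).val * (g j (e.symm i)).val := by
    simp only [packWord, pack, mul_sum, sum_mul, mul_assoc]
    exact sum_comm
  have hlt (i : ι) : ∑ j, (k j).val * (g j i).val < 256 := by
    calc ∑ j, (k j).val * (g j i).val ≤ ∑ _j : Fin n, 3 * 3 :=
          sum_le_sum fun j _ => Nat.mul_le_mul (Nat.le_of_lt_succ (ZMod.val_lt (k j)))
            (Nat.le_of_lt_succ (ZMod.val_lt (g j i)))
      _ < 256 := by
        rw [sum_const, card_univ, Fintype.card_fin, smul_eq_mul]
        omega
  rw [pack_eq, pack_land_packMask e (a := fun i => ∑ j, (k j).val * (g j i).val) hlt]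
  congr 1
  funext i
  simp only [Nat.cast_sum, Nat.cast_mul, ZMod.natCast_zmod_val, Finset.sum_apply, Pi.smul_apply,
    smul_eq_mul]

theorem packedLeeWt_packWord [Fintype ι] (hN : N ≤ 127) (x : ι → ZMod 4) :
    packedLeeWt (packWord e x) = leeWt x := by
  have three_mul : 3 * packWord e x = pack fun i => 3 * (x (e.symm i)).val := by
    simp only [packWord, pack, mul_sum, mul_assoc]
  have land_eq (c : ZMod 4) : c.val &&& 3 * c.val = leeVal c := by decide +revert
  have pack_eq : packWord e x &&& 3 * packWord e x = pack fun i => leeVal (x (e.symm i)) := by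
    have hlt (i : Fin N) := ZMod.val_lt (x (e.symm i))
    rw [three_mul, packWord, pack_land (fun i => by grind) fun i => by grind]
    simp only [land_eq]
  have sum_eq : ∑ i, leeVal (x (e.symm i)) = leeWt x := e.symm.sum_comp fun i => leeVal (x i)
  rw [packedLeeWt, pack_eq, pack_mod_255, sum_eq]
  calc ∑ i, leeVal (x (e.symm i)) ≤ ∑ _i : Fin N, 2 := sum_le_sum fun _ _ => leeVal_le_two _
    _ < 255 := by
      rw [sum_const, card_univ, Fintype.card_fin, smul_eq_mul]
      omega

end Packing

section LightWords

open Matrix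

variable {ι : Type*} {n N : ℕ}

/-- The rows of a generator matrix as packed words. -/
def packRows (e : ι ≃ Fin N) (M : Matrix (Fin n) ι (ZMod 4)) : List ℕ :=
  List.ofFn fun i => packWord e (M.row i)

theorem mem_map_lightSums_packRows {e : ι ≃ Fin N} (hn : n ≤ 28) {M : Matrix (Fin n) ι (ZMod 4)}
    {w s : ℕ} {t : List ℕ} :
    s ∈ (lightSums (packRows e M) w 0 t).map (· &&& packMask N) ↔
      s ∈ t.map (· &&& packMask N) ∨ ∃ k, leeWt k ≤ w ∧ packWord e (k ᵥ* M) = s := by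
  have vecMul_eq (k : Fin n → ZMod 4) : k ᵥ* M = ∑ i, k i • M.row i := vecMul_eq_sum k M
  simp only [List.mem_map, packRows, mem_lightSums_ofFn, zero_add, or_and_right, exists_or,
    vecMul_eq, ← packWord_sum_land_packMask e hn]
  simp only [← exists_and_right, and_assoc, exists_comm (α := ℕ), exists_and_left, exists_eq_left]

/-- The packed words of Lee weight at most `a + b + 1` in the code generated by `(I | B)`, assuming
that `(-Bᵀ | I)` generates the same code. One half of such a word has Lee weight at most `a` (on the
left) or `b` (on the right), so combinations of few rows of one of the two matrices suffice. -/
def packedLightWords (e : Fin n ⊕ Fin n ≃ Fin N) (B : Matrix (Fin n) (Fin n) (ZMod 4)) (a b : ℕ) :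
    List ℕ :=
  ((lightSums (packRows e (fromCols 1 B)) a 0
    (lightSums (packRows e (fromCols (-Bᵀ) 1)) b 0 [])).map (· &&& packMask N)).filter
      (packedLeeWt · ≤ a + b + 1)

theorem mem_packedLightWords_iff {e : Fin n ⊕ Fin n ≃ Fin N} (hN : N ≤ 56)
    {B : Matrix (Fin n) (Fin n) (ZMod 4)} (h : B * Bᵀ = -1) {a b s : ℕ} :
    s ∈ packedLightWords e B a b ↔
      ∃ x ∈ systematicCode B, leeWt x ≤ a + b + 1 ∧ packWord e x = s := by
  have card_eq : n + n = N := by simpa using Fintype.card_congr e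
  have hn : n ≤ 28 := by omega
  have hwt := packedLeeWt_packWord e (hN.trans (by norm_num))
  have mem_iff_right {x} := mem_systematicCode_iff_of_mul_transpose (x := x) h
  have mem_iff : s ∈ packedLightWords e B a b ↔ packedLeeWt s ≤ a + b + 1 ∧
      ((∃ v, leeWt v ≤ b ∧ packWord e (Sum.elim (v ᵥ* -Bᵀ) v) = s) ∨
        ∃ u, leeWt u ≤ a ∧ packWord e (Sum.elim u (u ᵥ* B)) = s) := by
    simp only [packedLightWords, List.mem_filter, mem_map_lightSums_packRows hn, List.map_nil,
      List.not_mem_nil, false_or, decide_eq_true_eq, and_comm, vecMul_fromCols, vecMul_one]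
  rw [mem_iff]
  constructor
  · rintro ⟨hs, ⟨v, -, rfl⟩ | ⟨u, -, rfl⟩⟩ <;> rw [hwt] at hs
    · exact ⟨_, mem_iff_right.mpr rfl, hs, rfl⟩
    · exact ⟨_, mem_systematicCode_iff.mpr rfl, hs, rfl⟩
  · rintro ⟨x, hx, hs, rfl⟩
    refine ⟨by rwa [hwt], ?_⟩
    rw [leeWt_sum] at hs
    obtain hr | hl : leeWt (x ∘ Sum.inr) ≤ b ∨ leeWt (x ∘ Sum.inl) ≤ a := by omega
    · exact .inl ⟨_, hr, by rw [← mem_iff_right.mp hx, Sum.elim_comp_inl_inr]⟩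
    · exact .inr ⟨_, hl, by rw [← mem_systematicCode_iff.mp hx, Sum.elim_comp_inl_inr]⟩

end LightWords

section PackedPairCount

/-- The packed words in `L` of Lee weight `w` whose base-256 digit number `i` is `2`. -/
def packedWordsWithTwoAt (L : List ℕ) (w i : ℕ) : Finset ℕ :=
  (L.filter fun s => s / 256 ^ i % 256 = 2 ∧ packedLeeWt s = w).toFinset

/-- The value of `pairCount C w d` when the words of Lee weight `w` in `C`, a code of length `N`,
occur in `L` as packed words. -/
def packedPairCount (N : ℕ) (L : List ℕ) (w d : ℕ) : ℕ :=
  ∑ i : Fin N, #{p ∈ packedWordsWithTwoAt L w i ×ˢ packedWordsWithTwoAt L w i |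
    packedLeeWt ((p.1 + p.2) &&& packMask N) = d}

variable {ι : Type*} [Fintype ι] {N : ℕ} {e : ι ≃ Fin N}

theorem packWord_image_wordsWithTwoAt (hN : N ≤ 127) {C : Set (ι → ZMod 4)} {L : List ℕ} {W : ℕ}
    (hL : ∀ s, s ∈ L ↔ ∃ x ∈ C, leeWt x ≤ W ∧ packWord e x = s) {w : ℕ} (hw : w ≤ W) (i : ι) :
    packWord e '' wordsWithTwoAt C w i = packedWordsWithTwoAt L w (e i) := by
  have val_eq_two_iff (c : ZMod 4) : c.val = 2 ↔ c = 2 := by decide +revert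
  ext s
  simp only [packedWordsWithTwoAt, List.coe_toFinset, List.mem_filter, hL, Set.mem_ofPred_eq,
    decide_eq_true_eq]
  constructor
  · rintro ⟨x, ⟨hx, hwt, hi⟩, rfl⟩
    exact ⟨⟨x, hx, hwt.trans_le hw, rfl⟩,
      by rwa [packWord_div_pow_mod, val_eq_two_iff], by rwa [packedLeeWt_packWord e hN]⟩
  · rintro ⟨⟨x, hx, -, rfl⟩, hi, hwt⟩
    rw [packWord_div_pow_mod, val_eq_two_iff] at hi
    rw [packedLeeWt_packWord e hN] at hwt
    exact ⟨x, ⟨hx, hwt, hi⟩, rfl⟩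

theorem pairCount_eq_packedPairCount (hN : N ≤ 127) {C : Set (ι → ZMod 4)} {L : List ℕ} {W : ℕ}
    (hL : ∀ s, s ∈ L ↔ ∃ x ∈ C, leeWt x ≤ W ∧ packWord e x = s) {w : ℕ} (hw : w ≤ W) (d : ℕ) :
    pairCount C w d = packedPairCount N L w d := by
  have image_eq (i : ι) : Prod.map (packWord e) (packWord e) '' pairsWithTwoAt C w d i =
      ↑({p ∈ packedWordsWithTwoAt L w (e i) ×ˢ packedWordsWithTwoAt L w (e i) |
        packedLeeWt ((p.1 + p.2) &&& packMask N) = d}) := by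
    ext p
    rw [coe_filter, Set.mem_ofPred_eq, mem_product, ← mem_coe, ← mem_coe,
      ← packWord_image_wordsWithTwoAt hN hL hw]
    constructor
    · rintro ⟨⟨x, y⟩, ⟨⟨hx, hy⟩, hd⟩, rfl⟩
      refine ⟨⟨⟨x, hx, rfl⟩, ⟨y, hy, rfl⟩⟩, ?_⟩
      rwa [Prod.map_fst, Prod.map_snd, packWord_add_land_packMask, packedLeeWt_packWord e hN]
    · obtain ⟨s, s'⟩ := p
      rintro ⟨⟨⟨x, hx, rfl⟩, ⟨y, hy, rfl⟩⟩, hd⟩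
      rw [packWord_add_land_packMask, packedLeeWt_packWord e hN] at hd
      exact ⟨(x, y), ⟨⟨hx, hy⟩, hd⟩, rfl⟩
  rw [pairCount, packedPairCount, ← e.sum_comp]
  refine sum_congr rfl fun i _ => ?_
  rw [← Set.ncard_coe_finset, ← image_eq, Set.ncard_image_of_injective]
  exact (packWord_injective e).prodMap (packWord_injective e)

end PackedPairCount

section MinimumWeight

variable {ι : Type*} [Fintype ι] {C : Set (ι → ZMod 4)}

theorem minLee_eq_of_pairCount_ne_zero {w d : ℕ} (hw : w ≠ 0)
    (hmin : ∀ x ∈ C, leeWt x ≤ w → leeWt x = 0 ∨ leeWt x = w) (hcount : pairCount C w d ≠ 0) :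
    minLee C = w := by
  obtain ⟨i, -, hi⟩ := exists_ne_zero_of_sum_ne_zero hcount
  obtain ⟨⟨x, _⟩, ⟨⟨hx, hwt, -⟩, -⟩, -⟩ := Set.nonempty_of_ncard_ne_zero hi
  refine IsLeast.csInf_eq ⟨⟨x, hx, ?_, hwt⟩, ?_⟩
  · rintro rfl
    exact hw (hwt.symm.trans (leeWt_eq_zero_iff.mpr rfl))
  · rintro _ ⟨y, hy, hy0, rfl⟩
    by_contra! hlt
    rcases hmin y hy hlt.le with h | h
    · exact hy0 (leeWt_eq_zero_iff.mp h)
    · exact hlt.ne h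

end MinimumWeight

section Length24

/-- The facts about the code of length 24 with `(α, β, γ) = (0, 1, 1)` and first row `r` which are
checked by computation: the identity behind its self-duality, and the result of searching its words
of Lee weight at most 10, which are `0` or of Lee weight 10 and yield the `pairCount` `k`. -/
def LightWordData (r : Fin 11 → ZMod 4) (k : ℕ) : Prop :=
  let B := Matrix.of (bdcB 0 1 1 r)
  let words := packedLightWords finSumFinEquiv B 5 4
  B * B.transpose = -1 ∧ (∀ s ∈ words, packedLeeWt s = 0 ∨ packedLeeWt s = 10) ∧
    packedPairCount 24 words 10 12 = k

instance (r : Fin 11 → ZMod 4) (k : ℕ) : Decidable (LightWordData r k) :=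
  inferInstanceAs (Decidable (_ ∧ _ ∧ _))

namespace LightWordData

variable {r : Fin 11 → ZMod 4} {k : ℕ}

theorem mem_packedLightWords_iff (h : LightWordData r k) (s : ℕ) :
    s ∈ packedLightWords finSumFinEquiv (Matrix.of (bdcB 0 1 1 r)) 5 4 ↔
      ∃ x ∈ (bdcCode 0 1 1 r : Set (Fin 12 ⊕ Fin 12 → ZMod 4)),
        leeWt x ≤ 10 ∧ packWord finSumFinEquiv x = s := by
  rw [bdcCode_eq_systematicCode]
  exact Z4Note.mem_packedLightWords_iff (by norm_num) h.1

theorem pairCount_bdcCode (h : LightWordData r k) :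
    pairCount (bdcCode 0 1 1 r : Set (Fin 12 ⊕ Fin 12 → ZMod 4)) 10 12 = k :=
  (pairCount_eq_packedPairCount (by norm_num) h.mem_packedLightWords_iff le_rfl 12).trans h.2.2

theorem selfDualZ4_bdcCode (h : LightWordData r k) : SelfDualZ4 (bdcCode 0 1 1 r) := by
  rw [bdcCode_eq_systematicCode]
  exact selfDualZ4_systematicCode h.1

theorem minLee_bdcCode (h : LightWordData r k) (hk : k ≠ 0) :
    minLee (bdcCode 0 1 1 r : Set (Fin 12 ⊕ Fin 12 → ZMod 4)) = 10 := by
  refine minLee_eq_of_pairCount_ne_zero (by norm_num) (fun x hx hwt => ?_)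
    (h.pairCount_bdcCode ▸ hk)
  rw [← packedLeeWt_packWord finSumFinEquiv (by norm_num)]
  exact h.2.1 _ ((h.mem_packedLightWords_iff _).mpr ⟨x, hx, hwt, rfl⟩)

theorem not_z4Equiv {r' : Fin 11 → ZMod 4} {k' : ℕ} (h : LightWordData r k)
    (h' : LightWordData r' k') (hk : k ≠ k') :
    ¬ Z4Equiv (bdcCode 0 1 1 r : Set (Fin 12 ⊕ Fin 12 → ZMod 4)) (bdcCode 0 1 1 r') := fun e =>
  hk (by rw [← h.pairCount_bdcCode, ← h'.pairCount_bdcCode, e.pairCount_eq])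

end LightWordData

set_option maxRecDepth 100000 in
theorem lightWordData_first : LightWordData ![1,3,1,0,3,3,0,3,2,2,2] 8272 := by decide +kernel

set_option maxRecDepth 100000 in
theorem lightWordData_second : LightWordData ![0,1,1,3,0,3,3,2,3,2,2] 7744 := by decide +kernel

set_option maxRecDepth 100000 in
theorem lightWordData_third : LightWordData ![3,1,0,3,0,0,0,1,3,3,2] 9328 := by decide +kernel

end Length24

end Z4Note

open Z4Note in
/-- the three listed bordered double circulant codes of length 24 are
self-dual Type I `ZMod 4`-codes of minimum Lee weight 10 and pairwise inequivalent. -/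
theorem three_inequivalent_bdc_codes_length24 :
    let D1 : Submodule (ZMod 4) ((Fin 12 ⊕ Fin 12) → ZMod 4) :=
      bdcCode 0 1 1 ![1,3,1,0,3,3,0,3,2,2,2]
    let D2 : Submodule (ZMod 4) ((Fin 12 ⊕ Fin 12) → ZMod 4) :=
      bdcCode 0 1 1 ![0,1,1,3,0,3,3,2,3,2,2]
    let D3 : Submodule (ZMod 4) ((Fin 12 ⊕ Fin 12) → ZMod 4) :=
      bdcCode 0 1 1 ![3,1,0,3,0,0,0,1,3,3,2]
    (SelfDualZ4 D1 ∧ ¬ TypeII (D1 : Set ((Fin 12 ⊕ Fin 12) → ZMod 4)) ∧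
      minLee (D1 : Set ((Fin 12 ⊕ Fin 12) → ZMod 4)) = 10) ∧
    (SelfDualZ4 D2 ∧ ¬ TypeII (D2 : Set ((Fin 12 ⊕ Fin 12) → ZMod 4)) ∧
      minLee (D2 : Set ((Fin 12 ⊕ Fin 12) → ZMod 4)) = 10) ∧
    (SelfDualZ4 D3 ∧ ¬ TypeII (D3 : Set ((Fin 12 ⊕ Fin 12) → ZMod 4)) ∧
      minLee (D3 : Set ((Fin 12 ⊕ Fin 12) → ZMod 4)) = 10) ∧
    ¬ Z4Equiv (D1 : Set ((Fin 12 ⊕ Fin 12) → ZMod 4))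
        (D2 : Set ((Fin 12 ⊕ Fin 12) → ZMod 4)) ∧
    ¬ Z4Equiv (D1 : Set ((Fin 12 ⊕ Fin 12) → ZMod 4))
        (D3 : Set ((Fin 12 ⊕ Fin 12) → ZMod 4)) ∧
    ¬ Z4Equiv (D2 : Set ((Fin 12 ⊕ Fin 12) → ZMod 4))
        (D3 : Set ((Fin 12 ⊕ Fin 12) → ZMod 4)) := by
  have h₁ := lightWordData_first
  have h₂ := lightWordData_second
  have h₃ := lightWordData_third
  have not_typeII (r : Fin 11 → ZMod 4) := not_typeII_bdcCode (α := 0) (β := 1) (by decide) 1 r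
  exact ⟨⟨h₁.selfDualZ4_bdcCode, not_typeII _, h₁.minLee_bdcCode (by norm_num)⟩,
    ⟨h₂.selfDualZ4_bdcCode, not_typeII _, h₂.minLee_bdcCode (by norm_num)⟩,
    ⟨h₃.selfDualZ4_bdcCode, not_typeII _, h₃.minLee_bdcCode (by norm_num)⟩,
    h₁.not_z4Equiv h₂ (by norm_num), h₁.not_z4Equiv h₃ (by norm_num),
    h₂.not_z4Equiv h₃ (by norm_num)⟩
end
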